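/- arXiv:1504.01148 — 2 statements merged into one kernel-verified Lean document; each statement's English description precedes it below -/
import Mathlib

section
/- Let R be a commutative Noetherian ring with unity, M an R-module (not necessarily finitely generated), and I an ideal of R with dim(R/(I + Ann M)) = d, where Ann M is the annihilator of M. Let t ≥ 0 be an integer and let J be an ideal of R such that H^{d+t}_{I+J}(M) ≠ 0. If cd(I,M) = t, then there is an isomorphism of R-modules H^d_J(H^t_I(M)) ≅ H^{d+t}_{I+J}(M). -/
universe u

open CategoryTheory

/-- The cohomological dimension of `M` with respect to `I`:
`cd(I,M) = sup { i ∈ ℕ | H^i_I(M) ≠ 0 }`, as an element of `ℕ∞`. -/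
noncomputable def cohomologicalDimension {R : Type u} [CommRing R] (I : Ideal R)
    (M : ModuleCat.{u} R) : ℕ∞ :=
  sSup {c : ℕ∞ | ∃ i : ℕ, c = i ∧ Nontrivial ((localCohomology I i).obj M)}

noncomputable section

open Abelian

variable {R : Type u} [CommRing R]

section Construction

/-- The canonical projection `R ⧸ J ^ n ⟶ R ⧸ J ^ m` for `m ≤ n`. -/
def quotPowProj (J : Ideal R) {m n : ℕ} (h : m ≤ n) :
    ModuleCat.of R (R ⧸ J ^ n) ⟶ ModuleCat.of R (R ⧸ J ^ m) :=
  ModuleCat.ofHom (Submodule.mapQ _ _ LinearMap.id (Ideal.pow_le_pow_right h))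

lemma quotPowProj_self (J : Ideal R) (n : ℕ) : quotPowProj J (le_refl n) = 𝟙 _ := by
  ext
  rfl

lemma quotPowProj_comp (J : Ideal R) {k m n : ℕ} (h : k ≤ m) (h' : m ≤ n) :
    quotPowProj J h' ≫ quotPowProj J h = quotPowProj J (h.trans h') := by
  ext
  rfl

variable {N N' N'' : Type u} [AddCommGroup N] [Module R N] [AddCommGroup N'] [Module R N']
  [AddCommGroup N''] [Module R N'']

variable (N) in
/-- The transition maps `Ext^i(R/J^m, N) → Ext^i(R/J^n, N)` for `m ≤ n`. -/
def extTransition (J : Ideal R) (i : ℕ) (m n : ℕ) (h : m ≤ n) :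
    Ext (ModuleCat.of R (R ⧸ J ^ m)) (ModuleCat.of R N) i →ₗ[R]
      Ext (ModuleCat.of R (R ⧸ J ^ n)) (ModuleCat.of R N) i :=
  (Ext.mk₀ (quotPowProj J h)).precompOfLinear R _ (zero_add i)

lemma extTransition_apply (J : Ideal R) (i : ℕ) (m n : ℕ) (h : m ≤ n)
    (x : Ext (ModuleCat.of R (R ⧸ J ^ m)) (ModuleCat.of R N) i) :
    extTransition N J i m n h x = (Ext.mk₀ (quotPowProj J h)).comp x (zero_add i) := rfl

instance (J : Ideal R) (i : ℕ) : DirectedSystem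
    (fun n : ℕ ↦ Ext (ModuleCat.of R (R ⧸ J ^ n)) (ModuleCat.of R N) i)
    (fun m n h ↦ extTransition N J i m n h) where
  map_self n x := by simp [extTransition_apply, quotPowProj_self]
  map_map k m n h h' x := by
    simp [extTransition_apply, quotPowProj_comp]

variable (N) in
/-- Local cohomology as the direct limit of the modules `Ext^i(R/J^n, N)`, where `Ext` is defined
through the derived category. -/
def ExtLimit (J : Ideal R) (i : ℕ) : Type u :=
  Module.DirectLimit (fun n : ℕ ↦ Ext (ModuleCat.of R (R ⧸ J ^ n)) (ModuleCat.of R N) i)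
    (extTransition N J i)

instance (J : Ideal R) (i : ℕ) : AddCommGroup (ExtLimit N J i) :=
  inferInstanceAs (AddCommGroup (Module.DirectLimit _ (extTransition N J i)))

instance (J : Ideal R) (i : ℕ) : Module R (ExtLimit N J i) :=
  inferInstanceAs (Module R (Module.DirectLimit _ (extTransition N J i)))

namespace ExtLimit

/-- The class in the direct limit of an element of `Ext^i(R/J^n, N)`. -/
def mk (J : Ideal R) (i n : ℕ) :
    Ext (ModuleCat.of R (R ⧸ J ^ n)) (ModuleCat.of R N) i →ₗ[R] ExtLimit N J i :=
  Module.DirectLimit.of R ℕ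
    (fun n : ℕ ↦ Ext (ModuleCat.of R (R ⧸ J ^ n)) (ModuleCat.of R N) i) (extTransition N J i) n

lemma exists_mk {J : Ideal R} {i : ℕ} (x : ExtLimit N J i) : ∃ n y, mk J i n y = x :=
  Module.DirectLimit.exists_of (f := extTransition N J i) x

lemma mk_eq_zero {J : Ideal R} {i n : ℕ}
    {x : Ext (ModuleCat.of R (R ⧸ J ^ n)) (ModuleCat.of R N) i} (h : mk J i n x = 0) :
    ∃ (m : ℕ) (hm : n ≤ m), (Ext.mk₀ (quotPowProj J hm)).comp x (zero_add i) = 0 :=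
  Module.DirectLimit.of.zero_exact (f := extTransition N J i) h

lemma mk_comp {J : Ideal R} {i n m : ℕ} (h : n ≤ m)
    (x : Ext (ModuleCat.of R (R ⧸ J ^ n)) (ModuleCat.of R N) i) :
    mk J i m ((Ext.mk₀ (quotPowProj J h)).comp x (zero_add i)) = mk J i n x :=
  Module.DirectLimit.of_f (f := extTransition N J i)

variable {P : Type*} [AddCommGroup P] [Module R P]

/-- The universal property of the direct limit. -/
def lift {J : Ideal R} {i : ℕ}
    (φ : ∀ n : ℕ, Ext (ModuleCat.of R (R ⧸ J ^ n)) (ModuleCat.of R N) i →ₗ[R] P)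
    (hφ : ∀ (m n : ℕ) (h : m ≤ n) x,
      φ n ((Ext.mk₀ (quotPowProj J h)).comp x (zero_add i)) = φ m x) :
    ExtLimit N J i →ₗ[R] P :=
  Module.DirectLimit.lift R ℕ _ (extTransition N J i) φ hφ

@[simp]
lemma lift_mk {J : Ideal R} {i : ℕ}
    (φ : ∀ n : ℕ, Ext (ModuleCat.of R (R ⧸ J ^ n)) (ModuleCat.of R N) i →ₗ[R] P)
    (hφ : ∀ (m n : ℕ) (h : m ≤ n) x,
      φ n ((Ext.mk₀ (quotPowProj J h)).comp x (zero_add i)) = φ m x) (n : ℕ)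
    (x : Ext (ModuleCat.of R (R ⧸ J ^ n)) (ModuleCat.of R N) i) :
    lift φ hφ (mk J i n x) = φ n x :=
  Module.DirectLimit.lift_of (f := extTransition N J i) φ hφ x

/-- Postcomposition with an extension class of degree `k`. -/
def postcomp (J : Ideal R) {i j k : ℕ} (β : Ext (ModuleCat.of R N) (ModuleCat.of R N') k)
    (h : i + k = j) : ExtLimit N J i →ₗ[R] ExtLimit N' J j :=
  lift (fun n ↦ mk J j n ∘ₗ β.postcompOfLinear R _ h) (fun m n hmn x ↦ by
    simp only [LinearMap.comp_apply, LinearMap.flip_apply, Ext.bilinearCompOfLinear_apply_apply]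
    rw [Ext.comp_assoc _ _ _ (zero_add i) h (by lia), mk_comp])

@[simp]
lemma postcomp_mk (J : Ideal R) {i j k : ℕ} (β : Ext (ModuleCat.of R N) (ModuleCat.of R N') k)
    (h : i + k = j) (n : ℕ) (x : Ext (ModuleCat.of R (R ⧸ J ^ n)) (ModuleCat.of R N) i) :
    postcomp J β h (mk J i n x) = mk J j n (x.comp β h) :=
  lift_mk ..

/-- Functoriality of local cohomology in the module. -/
def map (J : Ideal R) (i : ℕ) (f : N →ₗ[R] N') : ExtLimit N J i →ₗ[R] ExtLimit N' J i :=
  postcomp J (Ext.mk₀ (ModuleCat.ofHom f)) (add_zero i)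

@[simp]
lemma map_mk (J : Ideal R) (i : ℕ) (f : N →ₗ[R] N') (n : ℕ)
    (x : Ext (ModuleCat.of R (R ⧸ J ^ n)) (ModuleCat.of R N) i) :
    map J i f (mk J i n x) = mk J i n (x.comp (Ext.mk₀ (ModuleCat.ofHom f)) (add_zero i)) :=
  postcomp_mk ..

lemma map_map (J : Ideal R) (i : ℕ) (f : N →ₗ[R] N') (g : N' →ₗ[R] N'') (x : ExtLimit N J i) :
    map J i g (map J i f x) = map J i (g ∘ₗ f) x := by
  obtain ⟨n, y, rfl⟩ := exists_mk x
  simp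

lemma map_lsmul (J : Ideal R) (i : ℕ) (r : R) (x : ExtLimit N J i) :
    map J i (LinearMap.lsmul R N r) x = r • x := by
  obtain ⟨n, y, rfl⟩ := exists_mk x
  rw [map_mk, ← map_smul, Ext.smul_eq_comp_mk₀]
  rfl

lemma map_id (J : Ideal R) (i : ℕ) (x : ExtLimit N J i) : map J i LinearMap.id x = x := by
  obtain ⟨n, y, rfl⟩ := exists_mk x
  simp

/-- Linear equivalences induce linear equivalences on local cohomology. -/
def congr (J : Ideal R) (i : ℕ) (e : N ≃ₗ[R] N') : ExtLimit N J i ≃ₗ[R] ExtLimit N' J i :=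
  LinearEquiv.ofLinearMap (map J i e) (map J i e.symm)
    (by ext1 x; simp [map_map, map_id]) (by ext1 x; simp [map_map, map_id])

lemma smul_eq_zero_of_annihilator (J : Ideal R) (i : ℕ) {r : R}
    (hr : r ∈ Module.annihilator R N) (x : ExtLimit N J i) : r • x = 0 := by
  obtain ⟨n, y, rfl⟩ := exists_mk x
  have h : LinearMap.lsmul R N r = 0 := by
    ext y
    simpa using Module.mem_annihilator.mp hr y
  rw [← map_lsmul, map_mk, h]
  simp

lemma exists_pow_smul_eq_zero (J : Ideal R) (i : ℕ) (x : ExtLimit N J i) :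
    ∃ n : ℕ, ∀ a ∈ J ^ n, a • x = 0 := by
  obtain ⟨n, y, rfl⟩ := exists_mk x
  refine ⟨n, fun a ha ↦ ?_⟩
  have h : a • 𝟙 (ModuleCat.of R (R ⧸ J ^ n)) = 0 := by
    ext
    exact (Submodule.Quotient.mk_eq_zero _).mpr (by simpa using ha)
  have : a • y = 0 := by
    rw [← Ext.mk₀_id_comp y, ← Ext.smul_comp, ← Ext.mk₀_smul, h]
    simp
  rw [← map_smul, this, map_zero]

section LongExactSequence

/-- The short complex of module categories attached to an exact pair of linear maps. -/
abbrev shortComplex {f : N →ₗ[R] N'} {g : N' →ₗ[R] N''} (hfg : Function.Exact f g) :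
    ShortComplex (ModuleCat.{u} R) :=
  .mk (ModuleCat.ofHom f) (ModuleCat.ofHom g) (by ext x; exact hfg.apply_apply_eq_zero x)

variable {f : N →ₗ[R] N'} {g : N' →ₗ[R] N''}

lemma shortExact (hf : Function.Injective f) (hfg : Function.Exact f g)
    (hg : Function.Surjective g) : (shortComplex hfg).ShortExact :=
  ModuleCat.shortComplex_shortExact _ hfg hf hg

variable (hf : Function.Injective f) (hfg : Function.Exact f g) (hg : Function.Surjective g)

/-- The connecting homomorphism of the long exact sequence of local cohomology. -/
def δ (J : Ideal R) (i : ℕ) : ExtLimit N'' J i →ₗ[R] ExtLimit N J (i + 1) :=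
  postcomp J (shortExact hf hfg hg).extClass rfl

include hf hfg hg in
lemma exact_map_map (J : Ideal R) (i : ℕ) : Function.Exact (map J i f) (map J i g) := by
  refine LinearMap.exact_of_comp_of_mem_range ?_ fun x hx ↦ ?_
  · ext1 x
    obtain ⟨n, y, rfl⟩ := exists_mk x
    have : g ∘ₗ f = 0 := hfg.linearMap_comp_eq_zero
    simp [← ModuleCat.ofHom_comp, this]
  · obtain ⟨n, y, rfl⟩ := exists_mk x
    rw [map_mk] at hx
    obtain ⟨m, hm, h⟩ := mk_eq_zero hx
    rw [← Ext.comp_assoc _ _ _ (zero_add i) _ (by lia)] at h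
    obtain ⟨z, hz⟩ := Ext.covariant_sequence_exact₂ _ (shortExact hf hfg hg) _ h
    exact ⟨mk J i m z, by rw [map_mk, hz, mk_comp]⟩

lemma exact_map_δ (J : Ideal R) (i : ℕ) : Function.Exact (map J i g) (δ hf hfg hg J i) := by
  refine LinearMap.exact_of_comp_of_mem_range ?_ fun x hx ↦ ?_
  · ext1 x
    obtain ⟨n, y, rfl⟩ := exists_mk x
    simp [δ, Ext.comp_assoc_of_second_deg_zero,
      (shortExact hf hfg hg).comp_extClass]
  · obtain ⟨n, y, rfl⟩ := exists_mk x
    rw [δ, postcomp_mk] at hx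
    obtain ⟨m, hm, h⟩ := mk_eq_zero hx
    rw [← Ext.comp_assoc _ _ _ (zero_add i) _ (by lia)] at h
    obtain ⟨z, hz⟩ := Ext.covariant_sequence_exact₃ _ (shortExact hf hfg hg) _ _ h
    exact ⟨mk J i m z, by rw [map_mk, hz, mk_comp]⟩

lemma exact_δ_map (J : Ideal R) (i : ℕ) :
    Function.Exact (δ hf hfg hg J i) (map J (i + 1) f) := by
  refine LinearMap.exact_of_comp_of_mem_range ?_ fun x hx ↦ ?_
  · ext1 x
    obtain ⟨n, y, rfl⟩ := exists_mk x
    simp [δ, Ext.comp_assoc_of_third_deg_zero,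
      (shortExact hf hfg hg).extClass_comp]
  · obtain ⟨n, y, rfl⟩ := exists_mk x
    rw [map_mk] at hx
    obtain ⟨m, hm, h⟩ := mk_eq_zero hx
    rw [← Ext.comp_assoc _ _ _ (zero_add _) _ (by lia)] at h
    obtain ⟨z, hz⟩ := Ext.covariant_sequence_exact₁ _ (shortExact hf hfg hg) _ h rfl
    exact ⟨mk J i m z, by rw [δ, postcomp_mk, hz, mk_comp]⟩

include hf hfg hg in
lemma subsingleton_middle (J : Ideal R) (i : ℕ) [Subsingleton (ExtLimit N J i)]
    [Subsingleton (ExtLimit N'' J i)] : Subsingleton (ExtLimit N' J i) := by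
  refine subsingleton_of_forall_eq 0 fun x ↦ ?_
  obtain ⟨y, rfl⟩ := (exact_map_map hf hfg hg J i x).mp (Subsingleton.elim _ _)
  rw [Subsingleton.elim y 0, _root_.map_zero]

include hf hfg hg in
lemma subsingleton_left (J : Ideal R) (i : ℕ) [Subsingleton (ExtLimit N'' J i)]
    [Subsingleton (ExtLimit N' J (i + 1))] : Subsingleton (ExtLimit N J (i + 1)) := by
  refine subsingleton_of_forall_eq 0 fun x ↦ ?_
  obtain ⟨y, rfl⟩ := (exact_δ_map hf hfg hg J i x).mp (Subsingleton.elim _ _)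
  rw [Subsingleton.elim y 0, _root_.map_zero]

include hf hfg hg in
lemma subsingleton_right (J : Ideal R) (i : ℕ) [Subsingleton (ExtLimit N' J i)]
    [Subsingleton (ExtLimit N J (i + 1))] : Subsingleton (ExtLimit N'' J i) := by
  refine subsingleton_of_forall_eq 0 fun x ↦ ?_
  obtain ⟨y, rfl⟩ := (exact_map_δ hf hfg hg J i x).mp (Subsingleton.elim _ _)
  rw [Subsingleton.elim y 0, _root_.map_zero]

/-- Dimension shifting. -/
def quotEquivSucc (J : Ideal R) (i : ℕ) [Subsingleton (ExtLimit N' J (i + 1))] :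
    (ExtLimit N'' J i ⧸ LinearMap.range (map J i g)) ≃ₗ[R] ExtLimit N J (i + 1) :=
  (Submodule.quotEquivOfEq _ _ (exact_map_δ hf hfg hg J i).linearMap_ker_eq.symm).trans
    ((δ hf hfg hg J i).quotKerEquivOfSurjective fun x ↦
      (exact_δ_map hf hfg hg J i x).mp (Subsingleton.elim _ _))

/-- Dimension shifting in degrees where the middle term is acyclic. -/
def equivSucc (J : Ideal R) (i : ℕ) [Subsingleton (ExtLimit N' J i)]
    [Subsingleton (ExtLimit N' J (i + 1))] : ExtLimit N'' J i ≃ₗ[R] ExtLimit N J (i + 1) :=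
  (Submodule.quotEquivOfEqBot _ (by
    rw [Submodule.eq_bot_iff]
    rintro _ ⟨x, rfl⟩
    rw [Subsingleton.elim x 0, _root_.map_zero])).symm.trans (quotEquivSucc hf hfg hg J i)

/-- A surjection whose kernel has vanishing local cohomology in degrees `i` and `i + 1` induces
an isomorphism in degree `i`. -/
def equivOfKernel (J : Ideal R) (i : ℕ) [Subsingleton (ExtLimit N J i)]
    [Subsingleton (ExtLimit N J (i + 1))] : ExtLimit N' J i ≃ₗ[R] ExtLimit N'' J i :=
  LinearEquiv.ofBijective (map J i g) (by
    refine ⟨(injective_iff_map_eq_zero _).mpr fun x hx ↦ ?_, fun x ↦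
      (exact_map_δ hf hfg hg J i x).mp (Subsingleton.elim _ _)⟩
    obtain ⟨y, rfl⟩ := (exact_map_map hf hfg hg J i x).mp hx
    rw [Subsingleton.elim y 0, _root_.map_zero])

end LongExactSequence

lemma subsingleton_of_subsingleton [Subsingleton N] (J : Ideal R) (i : ℕ) :
    Subsingleton (ExtLimit N J i) := by
  refine subsingleton_of_forall_eq 0 fun x ↦ ?_
  rw [← map_id J i x, show (LinearMap.id : N →ₗ[R] N) = 0 from Subsingleton.elim _ _]
  obtain ⟨n, y, rfl⟩ := exists_mk x
  simp

lemma subsingleton_of_injective [Module.Injective R N] (J : Ideal R) (i : ℕ) :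
    Subsingleton (ExtLimit N J (i + 1)) := by
  have : Injective (ModuleCat.of R N) := Module.injective_object_of_injective_module R N
  refine subsingleton_of_forall_eq 0 fun x ↦ ?_
  obtain ⟨n, y, rfl⟩ := exists_mk x
  rw [Ext.eq_zero_of_injective y, _root_.map_zero]

end ExtLimit

end Construction

section IdealTorsion

variable {N N' : Type u} [AddCommGroup N] [Module R N] [AddCommGroup N'] [Module R N']

variable (N) in
/-- The submodule `Γ_J(N)` of elements killed by some power of the ideal `J`. -/
def idealTorsion (J : Ideal R) : Submodule R N where
  carrier := {x | ∃ n : ℕ, ∀ a ∈ J ^ n, a • x = 0}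
  zero_mem' := ⟨0, by simp⟩
  add_mem' := by
    rintro x y ⟨m, hx⟩ ⟨n, hy⟩
    refine ⟨m + n, fun a ha ↦ ?_⟩
    rw [smul_add, hx a (Ideal.pow_le_pow_right (by lia) ha),
      hy a (Ideal.pow_le_pow_right (by lia) ha), add_zero]
  smul_mem' := by
    rintro r x ⟨n, hx⟩
    exact ⟨n, fun a ha ↦ by rw [smul_comm, hx a ha, smul_zero]⟩

lemma map_mem_idealTorsion {J : Ideal R} (f : N →ₗ[R] N') {x : N} (hx : x ∈ idealTorsion N J) :
    f x ∈ idealTorsion N' J := by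
  obtain ⟨n, hn⟩ := hx
  exact ⟨n, fun a ha ↦ by rw [← map_smul, hn a ha, map_zero]⟩

lemma mem_idealTorsion_of_injective {J : Ideal R} {f : N →ₗ[R] N'} (hf : Function.Injective f)
    {x : N} (hx : f x ∈ idealTorsion N' J) : x ∈ idealTorsion N J := by
  obtain ⟨n, hn⟩ := hx
  exact ⟨n, fun a ha ↦ hf (by rw [map_smul, hn a ha, map_zero])⟩

lemma exists_pow_smul_eq_zero_of_fg {J : Ideal R} {L : Submodule R N} (hL : L.FG)
    (h : L ≤ idealTorsion N J) : ∃ n : ℕ, ∀ a ∈ J ^ n, ∀ x ∈ L, a • x = 0 := by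
  induction L, hL using Submodule.fg_induction with
  | singleton x =>
    obtain ⟨n, hn⟩ := h (Submodule.mem_span_singleton_self x)
    refine ⟨n, fun a ha y hy ↦ ?_⟩
    obtain ⟨r, rfl⟩ := Submodule.mem_span_singleton.mp hy
    rw [smul_comm, hn a ha, smul_zero]
  | sup L₁ L₂ _ _ ih₁ ih₂ =>
    obtain ⟨m, hm⟩ := ih₁ (le_sup_left.trans h)
    obtain ⟨n, hn⟩ := ih₂ (le_sup_right.trans h)
    refine ⟨m + n, fun a ha y hy ↦ ?_⟩
    obtain ⟨y₁, h₁, y₂, h₂, rfl⟩ := Submodule.mem_sup.mp hy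
    rw [smul_add, hm a (Ideal.pow_le_pow_right (by lia) ha) _ h₁,
      hn a (Ideal.pow_le_pow_right (by lia) ha) _ h₂, add_zero]

lemma mem_idealTorsion_of_smul_mem [IsNoetherianRing R] {J : Ideal R} {n : ℕ} {x : N}
    (h : ∀ a ∈ J ^ n, a • x ∈ idealTorsion N J) : x ∈ idealTorsion N J := by
  have hfg : (Submodule.map (LinearMap.toSpanSingleton R N x) (J ^ n)).FG :=
    Submodule.FG.map _ (IsNoetherian.noetherian (J ^ n))
  obtain ⟨m, hm⟩ := exists_pow_smul_eq_zero_of_fg (J := J) hfg (by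
    rintro _ ⟨a, ha, rfl⟩
    exact h a ha)
  refine ⟨m + n, fun a ha ↦ ?_⟩
  rw [pow_add] at ha
  induction ha using Submodule.mul_induction_on' with
  | mem_mul_mem b hb c hc =>
    rw [mul_smul]
    exact hm b hb _ ⟨c, hc, rfl⟩
  | add b _ c _ hb hc => rw [add_smul, hb, hc, add_zero]

/-- Over a Noetherian ring, the torsion submodule of an injective module is injective. -/
instance injective_idealTorsion [IsNoetherianRing R] (J : Ideal R) [Module.Injective R N] :
    Module.Injective R (idealTorsion N J) := by
  refine Module.Baer.injective fun 𝔞 g ↦ ?_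
  let g' : 𝔞 →ₗ[R] N := (idealTorsion N J).subtype ∘ₗ g
  obtain ⟨n, hn⟩ := exists_pow_smul_eq_zero_of_fg (J := J) (L := LinearMap.range g')
    (by rw [LinearMap.range_eq_map]; exact (IsNoetherian.noetherian (⊤ : Submodule R 𝔞)).map _)
    (by rintro _ ⟨x, rfl⟩; exact (g x).2)
  obtain ⟨k, hk⟩ := J.exists_pow_inf_eq_pow_smul 𝔞
  have hker : ∀ x : 𝔞, (x : R) ∈ J ^ (n + k) → g' x = 0 := by
    intro x hx
    have hx' : (x : R) ∈ J ^ n • 𝔞 := by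
      have : (x : R) ∈ J ^ (n + k) • (⊤ : Ideal R) ⊓ 𝔞 := ⟨by simpa using hx, x.2⟩
      rw [hk (n + k) (by lia), Nat.add_sub_cancel] at this
      exact Submodule.smul_mono le_rfl inf_le_right this
    have hx'' : x ∈ J ^ n • (⊤ : Submodule R 𝔞) := by
      have : (x : R) ∈ (J ^ n • (⊤ : Submodule R 𝔞)).map 𝔞.subtype := by
        rwa [Submodule.map_smul'', Submodule.map_subtype_top]
      obtain ⟨y, hy, hyx⟩ := this
      rwa [← Subtype.ext hyx]
    refine Submodule.smul_induction_on hx'' (fun a ha y _ ↦ ?_) fun y z hy hz ↦ ?_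
    · rw [map_smul]
      exact hn a ha _ ⟨y, rfl⟩
    · rw [map_add, hy, hz, add_zero]
  let q : 𝔞 →ₗ[R] R ⧸ J ^ (n + k) := Submodule.mkQ _ ∘ₗ 𝔞.subtype
  have hq : LinearMap.ker q ≤ LinearMap.ker g' := fun x hx ↦
    hker x ((Submodule.Quotient.mk_eq_zero _).mp hx)
  obtain ⟨h, hh⟩ := Module.Injective.out (R := R) (Q := N) ((LinearMap.ker q).liftQ q le_rfl)
    (LinearMap.ker_eq_bot.mp (Submodule.ker_liftQ_eq_bot _ _ _ le_rfl))
    ((LinearMap.ker q).liftQ g' hq)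
  refine ⟨LinearMap.codRestrict _ (h ∘ₗ Submodule.mkQ _) fun r ↦ ⟨n + k, fun a ha ↦ ?_⟩,
    fun x hx ↦ Subtype.ext (hh (Submodule.Quotient.mk ⟨x, hx⟩))⟩
  rw [LinearMap.comp_apply, ← map_smul, ← map_smul, smul_eq_mul, Submodule.mkQ_apply,
    (Submodule.Quotient.mk_eq_zero _).mpr (Ideal.mul_mem_right _ _ ha), map_zero]

end IdealTorsion

namespace ExtLimit

variable {N N' : Type u} [AddCommGroup N] [Module R N] [AddCommGroup N'] [Module R N']

variable (N) in
/-- The canonical map `H^0_J(N) → N`. -/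
def toModule (J : Ideal R) : ExtLimit N J 0 →ₗ[R] N :=
  lift (fun n ↦ LinearMap.applyₗ (Submodule.Quotient.mk (1 : R) : R ⧸ J ^ n) ∘ₗ
    (ModuleCat.homLinearEquiv (S := R)).toLinearMap ∘ₗ
      (Ext.linearEquiv₀ (R := R)).toLinearMap) (by
    intro m n h x
    obtain ⟨f, rfl⟩ := (Ext.linearEquiv₀ (R := R)).symm.surjective x
    have : (Ext.mk₀ (quotPowProj J h)).comp ((Ext.linearEquiv₀ (R := R)).symm f) (zero_add 0) =
        (Ext.linearEquiv₀ (R := R)).symm (quotPowProj J h ≫ f) := by simp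
    simp only [LinearMap.comp_apply, LinearEquiv.coe_coe]
    rw [this, LinearEquiv.apply_symm_apply, LinearEquiv.apply_symm_apply]
    rfl)

lemma toModule_mk₀ (J : Ideal R) (n : ℕ)
    (f : ModuleCat.of R (R ⧸ J ^ n) ⟶ ModuleCat.of R N) :
    toModule N J (mk J 0 n (Ext.mk₀ f)) = f.hom (Submodule.Quotient.mk 1) := by
  rw [toModule, lift_mk, ← Ext.linearEquiv₀_symm_apply (R := R)]
  simp only [LinearMap.comp_apply, LinearEquiv.coe_coe]
  rw [LinearEquiv.apply_symm_apply]
  rfl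

lemma exists_mk₀ {J : Ideal R} (x : ExtLimit N J 0) :
    ∃ (n : ℕ) (f : ModuleCat.of R (R ⧸ J ^ n) ⟶ ModuleCat.of R N), mk J 0 n (Ext.mk₀ f) = x := by
  obtain ⟨n, y, rfl⟩ := exists_mk x
  obtain ⟨f, rfl⟩ := (Ext.linearEquiv₀ (R := R)).symm.surjective y
  exact ⟨n, f, by simp⟩

lemma toModule_map (J : Ideal R) (f : N →ₗ[R] N') (x : ExtLimit N J 0) :
    toModule N' J (map J 0 f x) = f (toModule N J x) := by
  obtain ⟨n, g, rfl⟩ := exists_mk₀ x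
  rw [map_mk, Ext.mk₀_comp_mk₀, toModule_mk₀, toModule_mk₀]
  rfl

lemma toModule_injective (J : Ideal R) : Function.Injective (toModule N J) := by
  refine (injective_iff_map_eq_zero _).mpr fun x hx ↦ ?_
  obtain ⟨n, f, rfl⟩ := exists_mk₀ x
  rw [toModule_mk₀] at hx
  have : f = 0 := by
    ext
    exact hx
  rw [this, Ext.mk₀_zero, _root_.map_zero]

lemma range_toModule (J : Ideal R) : LinearMap.range (toModule N J) = idealTorsion N J := by
  refine le_antisymm ?_ fun x hx ↦ ?_
  · rintro _ ⟨x, rfl⟩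
    exact map_mem_idealTorsion _ (exists_pow_smul_eq_zero J 0 x)
  · obtain ⟨n, hn⟩ := hx
    refine ⟨mk J 0 n (Ext.mk₀ (ModuleCat.ofHom
      ((J ^ n).liftQ (LinearMap.toSpanSingleton R N x) fun a ha ↦ hn a ha))), ?_⟩
    rw [toModule_mk₀]
    exact one_smul R x

variable (N) in
/-- The identification of `H^0_J(N)` with the torsion submodule `Γ_J(N)`. -/
def zeroEquiv (J : Ideal R) : ExtLimit N J 0 ≃ₗ[R] idealTorsion N J :=
  (LinearEquiv.ofInjective _ (toModule_injective J)).trans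
    (LinearEquiv.ofEq _ _ (range_toModule J))

lemma map_zero_injective (J : Ideal R) {f : N →ₗ[R] N'} (hf : Function.Injective f) :
    Function.Injective (map J 0 f) := by
  refine (injective_iff_map_eq_zero _).mpr fun x hx ↦ toModule_injective J (hf ?_)
  rw [← toModule_map, hx, _root_.map_zero, _root_.map_zero, _root_.map_zero]

lemma injective_zero [IsNoetherianRing R] (J : Ideal R) [Module.Injective R N] :
    Module.Injective R (ExtLimit N J 0) :=
  (Module.Baer.of_equiv (zeroEquiv N J).symm
    (Module.Baer.of_injective (injective_idealTorsion J))).injective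

variable (R N) in
/-- Every module embeds into an injective module. -/
lemma exists_injective_embedding : ∃ (E : Type u) (_ : AddCommGroup E) (_ : Module R E)
    (_ : Module.Injective R E) (f : N →ₗ[R] E), Function.Injective f := by
  let P := EnoughInjectives.presentation (ModuleCat.of R N)
  have : Injective (ModuleCat.of R P.some.J) := P.some.injective
  exact ⟨P.some.J, _, _, Module.injective_module_of_injective_object R P.some.J,
    P.some.f.hom, (ModuleCat.mono_iff_injective _).mp inferInstance⟩

lemma exact_mkQ_range (f : N →ₗ[R] N') : Function.Exact f (LinearMap.range f).mkQ :=
  LinearMap.exact_map_mkQ_range f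

/-- Torsion modules have no higher local cohomology. -/
lemma subsingleton_of_idealTorsion_eq_top [IsNoetherianRing R] (J : Ideal R) (i : ℕ)
    (h : idealTorsion N J = ⊤) : Subsingleton (ExtLimit N J (i + 1)) := by
  induction i generalizing N with
  | zero =>
    obtain ⟨E, _, _, _, f, hf⟩ := exists_injective_embedding R N
    let f' : N →ₗ[R] idealTorsion E J :=
      f.codRestrict _ fun x ↦ map_mem_idealTorsion f (h ▸ Submodule.mem_top)
    have hf' : Function.Injective f' := fun x y hxy ↦ hf (congrArg Subtype.val hxy)
    have := subsingleton_of_injective (N := idealTorsion E J) J 0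
    refine (quotEquivSucc hf' (exact_mkQ_range f')
      (Submodule.mkQ_surjective _) J 0).symm.toEquiv.subsingleton_congr.mpr ?_
    rw [Submodule.Quotient.subsingleton_iff, LinearMap.range_eq_top]
    intro x
    obtain ⟨y, hy⟩ := Submodule.mkQ_surjective _ (toModule _ J x)
    have : y ∈ LinearMap.range (toModule (idealTorsion E J) J) := by
      rw [range_toModule]
      exact mem_idealTorsion_of_injective (f := (idealTorsion E J).subtype)
        Subtype.val_injective y.2
    obtain ⟨z, rfl⟩ := this
    exact ⟨z, toModule_injective J (by rw [toModule_map, hy])⟩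
  | succ i ih =>
    obtain ⟨E, _, _, _, f, hf⟩ := exists_injective_embedding R N
    let f' : N →ₗ[R] idealTorsion E J :=
      f.codRestrict _ fun x ↦ map_mem_idealTorsion f (h ▸ Submodule.mem_top)
    have hf' : Function.Injective f' := fun x y hxy ↦ hf (congrArg Subtype.val hxy)
    have := subsingleton_of_injective (N := idealTorsion E J) J (i + 1)
    have := ih (N := idealTorsion E J ⧸ LinearMap.range f') (by
      refine eq_top_iff.mpr fun x _ ↦ ?_
      obtain ⟨y, rfl⟩ := Submodule.mkQ_surjective _ x
      exact map_mem_idealTorsion _ (mem_idealTorsion_of_injective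
        (f := (idealTorsion E J).subtype) Subtype.val_injective y.2))
    exact subsingleton_left hf' (exact_mkQ_range f') (Submodule.mkQ_surjective _) J (i + 1)

end ExtLimit

section Vanishing

open scoped Pointwise

variable {N N' : Type u} [AddCommGroup N] [Module R N] [AddCommGroup N'] [Module R N']

lemma exists_fg_ext_comp_eq [IsNoetherianRing R] (X : ModuleCat.{u} R) [Module.Finite R X] (i : ℕ)
    (x : Ext X (ModuleCat.of R N) i) : ∃ L : Submodule R N, L.FG ∧
      ∃ y : Ext X (ModuleCat.of R L) i,
        y.comp (Ext.mk₀ (ModuleCat.ofHom L.subtype)) (add_zero i) = x := by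
  induction i generalizing X with
  | zero =>
    obtain ⟨f, rfl⟩ := (Ext.linearEquiv₀ (R := R)).symm.surjective x
    refine ⟨LinearMap.range f.hom, ?_, Ext.mk₀ (ModuleCat.ofHom f.hom.rangeRestrict), ?_⟩
    · rw [LinearMap.range_eq_map]
      exact Module.Finite.fg_top.map _
    · rw [Ext.mk₀_comp_mk₀]
      rfl
  | succ i ih =>
    obtain ⟨P, _, _, _, _, f, hf⟩ := Module.exists_finite_presentation R X
    have hS := LinearMap.shortExact_shortComplexKer hf
    obtain ⟨z, rfl⟩ := precomp_extClass_surjective_of_projective_X₂ (ModuleCat.of R N) hS i x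
    obtain ⟨L, hL, y, rfl⟩ := ih _ z
    refine ⟨L, hL, hS.extClass.comp y (add_comm 1 i), ?_⟩
    exact Ext.comp_assoc _ _ _ (add_comm 1 i) (add_zero i) (by lia)

namespace ExtLimit

lemma exists_fg_map_eq [IsNoetherianRing R] (J : Ideal R) (i : ℕ) (x : ExtLimit N J i) :
    ∃ L : Submodule R N, L.FG ∧ ∃ y, map J i L.subtype y = x := by
  obtain ⟨n, z, rfl⟩ := exists_mk x
  have : Module.Finite R (ModuleCat.of R (R ⧸ J ^ n)) :=
    inferInstanceAs (Module.Finite R (R ⧸ J ^ n))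
  obtain ⟨L, hL, y, rfl⟩ := exists_fg_ext_comp_eq _ i z
  exact ⟨L, hL, mk J i n y, map_mk ..⟩

/-- Grothendieck vanishing for finitely generated modules. -/
lemma subsingleton_of_finite_of_supportDim_lt [IsNoetherianRing R] [Module.Finite R N]
    (J : Ideal R) {n i : ℕ} (h : Module.supportDim R N < n) (hi : n ≤ i) :
    Subsingleton (ExtLimit N J i) := by
  induction n generalizing N i with
  | zero =>
    have : Subsingleton N := by
      rw [← Module.supportDim_eq_bot_iff_subsingleton R]
      exact WithBot.lt_coe_bot.mp h
    exact subsingleton_of_subsingleton J i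
  | succ n ih =>
    obtain ⟨i, rfl⟩ : ∃ k, i = k + 1 := ⟨i - 1, by lia⟩
    let T := idealTorsion N J
    have hT : Subsingleton (ExtLimit T J (i + 1)) :=
      subsingleton_of_idealTorsion_eq_top J i <| eq_top_iff.mpr fun x _ ↦
        mem_idealTorsion_of_injective T.injective_subtype x.2
    have hdim : Module.supportDim R (N ⧸ T) < (n + 1 : ℕ) :=
      (Module.supportDim_le_of_surjective T.mkQ T.mkQ_surjective).trans_lt h
    obtain ⟨r, hrJ, hr⟩ : ∃ r ∈ Module.annihilator R (R ⧸ J), IsSMulRegular (N ⧸ T) r := by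
      rw [← IsSMulRegular.subsingleton_linearMap_iff]
      refine subsingleton_of_forall_eq 0 fun f ↦ ?_
      ext
      obtain ⟨x, hx⟩ := T.mkQ_surjective (f (Submodule.Quotient.mk 1))
      have hxT : x ∈ T := mem_idealTorsion_of_smul_mem (n := 1) fun a ha ↦ by
        rw [pow_one] at ha
        rw [← Submodule.Quotient.mk_eq_zero, ← Submodule.mkQ_apply, map_smul]
        erw [hx]
        rw [← map_smul, ← Submodule.Quotient.mk_smul, smul_eq_mul, mul_one,
          (Submodule.Quotient.mk_eq_zero J).mpr ha, _root_.map_zero]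
      rw [Submodule.mkQ_apply, (Submodule.Quotient.mk_eq_zero T).mpr hxT] at hx
      exact hx.symm
    rw [Ideal.annihilator_quotient] at hrJ
    have hquot : Subsingleton (ExtLimit (QuotSMulTop r (N ⧸ T)) J i) := by
      refine ih ?_ (by lia)
      have := (Module.supportDim_quotSMulTop_succ_le_of_notMem_minimalPrimes
        (fun _ ↦ hr.notMem_of_mem_minimalPrimes)).trans_lt hdim
      rw [Nat.cast_add, Nat.cast_one] at this
      exact lt_of_add_lt_add_right this
    have hex : Function.Exact (LinearMap.lsmul R (N ⧸ T) r)
        (r • (⊤ : Submodule R (N ⧸ T))).mkQ := by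
      intro x
      rw [Submodule.mkQ_apply, Submodule.Quotient.mk_eq_zero]
      simp [Submodule.mem_smul_pointwise_iff_exists]
    have hinj : Function.Injective (map J (i + 1) (LinearMap.lsmul R (N ⧸ T) r)) := by
      refine (injective_iff_map_eq_zero _).mpr fun x hx ↦ ?_
      obtain ⟨y, rfl⟩ := (exact_δ_map (f := LinearMap.lsmul R (N ⧸ T) r) hr hex
        (Submodule.mkQ_surjective _) J i x).mp hx
      rw [show y = 0 from hquot.elim _ _, _root_.map_zero]
    have : Subsingleton (ExtLimit (N ⧸ T) J (i + 1)) := by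
      refine subsingleton_of_forall_eq 0 fun x ↦ ?_
      obtain ⟨k, hk⟩ := exists_pow_smul_eq_zero J (i + 1) x
      have : IsSMulRegular (ExtLimit (N ⧸ T) J (i + 1)) r := fun x y hxy ↦
        hinj (by simpa only [map_lsmul] using hxy)
      exact (this.pow k).right_eq_zero_of_smul (hk _ (Ideal.pow_mem_pow hrJ k))
    exact subsingleton_middle T.injective_subtype (LinearMap.exact_subtype_mkQ T)
      T.mkQ_surjective J (i + 1)

/-- Grothendieck vanishing for arbitrary modules. -/
lemma subsingleton_of_forall_supportDim_lt [IsNoetherianRing R] (J : Ideal R) {n i : ℕ}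
    (h : ∀ L : Submodule R N, L.FG → Module.supportDim R L < n) (hi : n ≤ i) :
    Subsingleton (ExtLimit N J i) := by
  refine subsingleton_of_forall_eq 0 fun x ↦ ?_
  obtain ⟨L, hL, y, rfl⟩ := exists_fg_map_eq J i x
  have : Module.Finite R L := .of_fg hL
  have := subsingleton_of_finite_of_supportDim_lt J (h L hL) hi
  rw [Subsingleton.elim y 0, _root_.map_zero]

lemma subsingleton_extLimit_extLimit [IsNoetherianRing R] (I J : Ideal R) {d : ℕ}
    (hd : ringKrullDim (R ⧸ (I + Module.annihilator R N)) = d) (q : ℕ) {p : ℕ} (hp : d < p) :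
    Subsingleton (ExtLimit (ExtLimit N I q) J p) := by
  refine subsingleton_of_forall_supportDim_lt J (n := d + 1) (fun L hL ↦ ?_) hp
  have : Module.Finite R L := .of_fg hL
  obtain ⟨n, hn⟩ := exists_pow_smul_eq_zero_of_fg (J := I) hL fun x _ ↦
    exists_pow_smul_eq_zero I q x
  have hsupp : Module.support R L ⊆ Module.support R (R ⧸ (I + Module.annihilator R N)) := by
    rw [Module.support_eq_zeroLocus, Module.support_eq_zeroLocus, Ideal.annihilator_quotient]
    intro 𝔭 h𝔭
    refine (sup_le (c := 𝔭.asIdeal) (fun a ha ↦ 𝔭.2.mem_of_pow_mem n (h𝔭 ?_)) fun a ha ↦ h𝔭 ?_ :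
      I + Module.annihilator R N ≤ 𝔭.asIdeal)
    · exact Module.mem_annihilator.mpr fun x ↦ Subtype.ext (hn _ (Ideal.pow_mem_pow ha n) _ x.2)
    · exact Module.mem_annihilator.mpr fun x ↦
        Subtype.ext (smul_eq_zero_of_annihilator I q ha x.1)
  have : Module.supportDim R L ≤ d := by
    rw [← hd, ← Module.supportDim_quotient_eq_ringKrullDim]
    exact Order.krullDim_le_of_strictMono (fun a ↦ ⟨a.1, hsupp a.2⟩) fun {_ _} h ↦ h
  exact this.trans_lt (by exact_mod_cast Nat.lt_succ_self d)

end ExtLimit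

end Vanishing

namespace ExtLimit

section Composition

variable {M E C : Type u} [AddCommGroup M] [Module R M] [AddCommGroup E] [Module R E]
  [AddCommGroup C] [Module R C]

lemma range_toModule_comp_toModule (I J : Ideal R) :
    LinearMap.range (toModule M I ∘ₗ toModule (ExtLimit M I 0) J) = idealTorsion M (I + J) := by
  refine le_antisymm ?_ fun y hy ↦ ?_
  · rintro _ ⟨x, rfl⟩
    obtain ⟨m, hm⟩ := exists_pow_smul_eq_zero I 0 (toModule _ J x)
    obtain ⟨n, hn⟩ := exists_pow_smul_eq_zero J 0 x
    refine ⟨m + n, fun a ha ↦ ?_⟩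
    obtain ⟨b, hb, c, hc, rfl⟩ := Submodule.mem_sup.mp (Ideal.sup_pow_add_le_pow_sup_pow ha)
    rw [LinearMap.comp_apply, ← map_smul, add_smul, hm b hb, ← map_smul, hn c hc,
      _root_.map_zero, add_zero, _root_.map_zero]
  · obtain ⟨n, hn⟩ := hy
    obtain ⟨z, rfl⟩ : y ∈ LinearMap.range (toModule M I) := by
      rw [range_toModule]
      exact ⟨n, fun a ha ↦ hn a (Ideal.pow_right_mono le_sup_left n ha)⟩
    obtain ⟨x, rfl⟩ : z ∈ LinearMap.range (toModule (ExtLimit M I 0) J) := by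
      rw [range_toModule]
      refine ⟨n, fun a ha ↦ toModule_injective I ?_⟩
      rw [map_smul, hn a (Ideal.pow_right_mono le_sup_right n ha), _root_.map_zero]
    exact ⟨x, rfl⟩

variable (M) in
/-- The identification of `H^0_J(H^0_I(M))` with `H^0_{I+J}(M)`. -/
def compZeroEquiv (I J : Ideal R) :
    ExtLimit (ExtLimit M I 0) J 0 ≃ₗ[R] ExtLimit M (I + J) 0 :=
  (LinearEquiv.ofInjective (toModule M I ∘ₗ toModule (ExtLimit M I 0) J)
    ((toModule_injective I).comp (toModule_injective J))).trans <|
    (LinearEquiv.ofEq _ _ (range_toModule_comp_toModule I J)).trans (zeroEquiv M (I + J)).symm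

lemma toModule_compZeroEquiv (I J : Ideal R) (x : ExtLimit (ExtLimit M I 0) J 0) :
    toModule M (I + J) (compZeroEquiv M I J x) = toModule M I (toModule _ J x) := by
  have : ∀ y, toModule M (I + J) ((zeroEquiv M (I + J)).symm y) = y := fun y ↦ by
    obtain ⟨z, rfl⟩ := (zeroEquiv M (I + J)).surjective y
    rw [LinearEquiv.symm_apply_apply]
    rfl
  exact this _

lemma compZeroEquiv_map (I J : Ideal R) (g : E →ₗ[R] C) (x : ExtLimit (ExtLimit E I 0) J 0) :
    compZeroEquiv C I J (map J 0 (map I 0 g) x) = map (I + J) 0 g (compZeroEquiv E I J x) :=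
  toModule_injective _ (by simp only [toModule_compZeroEquiv, toModule_map])

/-- The cokernels of the maps induced by `g` on `H^0_J(H^0_I(-))` and `H^0_{I+J}(-)` agree. -/
def quotCompZeroEquiv (I J : Ideal R) (g : E →ₗ[R] C) :
    (ExtLimit (ExtLimit C I 0) J 0 ⧸ LinearMap.range (map J 0 (map I 0 g))) ≃ₗ[R]
      (ExtLimit C (I + J) 0 ⧸ LinearMap.range (map (I + J) 0 g)) :=
  Submodule.Quotient.equiv _ _ (compZeroEquiv C I J) (by
    ext y
    constructor
    · rintro ⟨_, ⟨x, rfl⟩, rfl⟩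
      exact ⟨_, (compZeroEquiv_map I J g x).symm⟩
    · rintro ⟨x, rfl⟩
      obtain ⟨x, rfl⟩ := (compZeroEquiv E I J).surjective x
      exact ⟨_, ⟨x, rfl⟩, compZeroEquiv_map I J g x⟩)

/-- If `M` has no higher local cohomology along `I`, then `H^d_J(H^0_I(M)) ≅ H^d_{I+J}(M)`. -/
lemma nonempty_equiv_of_acyclic [IsNoetherianRing R] (I J : Ideal R) (d : ℕ)
    (hM : ∀ q, Subsingleton (ExtLimit M I (q + 1))) :
    Nonempty (ExtLimit (ExtLimit M I 0) J d ≃ₗ[R] ExtLimit M (I + J) d) := by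
  induction d generalizing M with
  | zero => exact ⟨compZeroEquiv M I J⟩
  | succ d ih =>
    obtain ⟨E, _, _, _, f, hf⟩ := exists_injective_embedding R M
    have hfg := exact_mkQ_range f
    have hg := Submodule.mkQ_surjective (LinearMap.range f)
    set g := (LinearMap.range f).mkQ
    have hE (𝔞 : Ideal R) (q : ℕ) := subsingleton_of_injective (N := E) 𝔞 q
    have hE₀ := injective_zero (N := E) I
    have hE' (q : ℕ) := subsingleton_of_injective (N := ExtLimit E I 0) J q
    have hg' : Function.Surjective (map I 0 g) := fun x ↦
      (exact_map_δ hf hfg hg I 0 x).mp ((hM 0).elim _ _)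
    have hf' := map_zero_injective I hf
    have hfg' := exact_map_map hf hfg hg I 0
    cases d with
    | zero =>
      exact ⟨(quotEquivSucc hf' hfg' hg' J 0).symm.trans <|
        (quotCompZeroEquiv I J g).trans (quotEquivSucc hf hfg hg (I + J) 0)⟩
    | succ d =>
      obtain ⟨e⟩ := ih (M := E ⧸ LinearMap.range f) fun q ↦
        have := hM (q + 1)
        subsingleton_right hf hfg hg I (q + 1)
      exact ⟨(equivSucc hf' hfg' hg' J (d + 1)).symm.trans <|
        e.trans (equivSucc hf hfg hg (I + J) (d + 1))⟩

section Shift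

variable {f : M →ₗ[R] E} {g : E →ₗ[R] C} (hf : Function.Injective f)
  (hfg : Function.Exact f g) (hg : Function.Surjective g) {I J : Ideal R}

include hf hfg hg

lemma exact_map_rangeRestrict (I : Ideal R) :
    Function.Exact (map I 0 f) (map I 0 g).rangeRestrict := fun x ↦
  Subtype.ext_iff.trans (exact_map_map hf hfg hg I 0 x)

lemma exact_subtype_range_δ (I : Ideal R) :
    Function.Exact (LinearMap.range (map I 0 g)).subtype (δ hf hfg hg I 0) := fun x ↦ by
  rw [exact_map_δ hf hfg hg I 0 x]
  simp

variable [Module.Injective R E]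

lemma δ_surjective_of_injective (I : Ideal R) (i : ℕ) : Function.Surjective (δ hf hfg hg I i) :=
  have := subsingleton_of_injective (N := E) I i
  fun x ↦ (exact_δ_map hf hfg hg I i x).mp (Subsingleton.elim _ _)

variable [IsNoetherianRing R]

/-- The image of `H^0_I(E) → H^0_I(C)` has no local cohomology in degree `p + 1`. -/
lemma subsingleton_range_map (p : ℕ) [Subsingleton (ExtLimit (ExtLimit M I 0) J (p + 2))] :
    Subsingleton (ExtLimit (LinearMap.range (map I 0 g)) J (p + 1)) := by
  have := injective_zero (N := E) I
  have := subsingleton_of_injective (N := ExtLimit E I 0) J p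
  exact subsingleton_right (map_zero_injective I hf) (exact_map_rangeRestrict hf hfg hg I)
    (map I 0 g).surjective_rangeRestrict J (p + 1)

lemma subsingleton_extLimit_extLimit_cokernel {d : ℕ}
    (h : ∀ q p, d < p → Subsingleton (ExtLimit (ExtLimit M I q) J p)) (q p : ℕ) (hp : d < p) :
    Subsingleton (ExtLimit (ExtLimit C I q) J p) := by
  obtain ⟨p, rfl⟩ : ∃ k, p = k + 1 := ⟨p - 1, by lia⟩
  cases q with
  | zero =>
    have := h 0 (p + 2) (by lia)
    have := h 1 (p + 1) hp
    have := subsingleton_range_map (I := I) (J := J) hf hfg hg p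
    exact subsingleton_middle (Submodule.injective_subtype _) (exact_subtype_range_δ hf hfg hg I)
      (δ_surjective_of_injective hf hfg hg I 0) J (p + 1)
  | succ q =>
    have (i : ℕ) := subsingleton_of_injective (N := E) I i
    exact (congr J (p + 1) (equivSucc hf hfg hg I (q + 1))).toEquiv.subsingleton_congr.mpr
      (h _ _ hp)

/-- The description of `H^0_J(H^1_I(M))` as a cokernel. -/
lemma nonempty_quot_equiv [Subsingleton (ExtLimit (ExtLimit M I 0) J 1)]
    [Subsingleton (ExtLimit (ExtLimit M I 0) J 2)] :
    Nonempty ((ExtLimit (ExtLimit C I 0) J 0 ⧸ LinearMap.range (map J 0 (map I 0 g))) ≃ₗ[R]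
      ExtLimit (ExtLimit M I 1) J 0) := by
  have := subsingleton_range_map (I := I) (J := J) hf hfg hg 0
  let B := LinearMap.range (map I 0 g)
  have hB : Function.Surjective (map J 0 (map I 0 g).rangeRestrict) := fun x ↦
    (exact_map_δ (map_zero_injective I hf) (exact_map_rangeRestrict hf hfg hg I)
      (map I 0 g).surjective_rangeRestrict J 0 x).mp (Subsingleton.elim _ _)
  have hex := exact_map_map B.injective_subtype (exact_subtype_range_δ hf hfg hg I)
      (δ_surjective_of_injective hf hfg hg I 0) J 0
  have hcomp (y) : map J 0 B.subtype (map J 0 (map I 0 g).rangeRestrict y) =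
      map J 0 (map I 0 g) y := by
    rw [map_map, LinearMap.rangeRestrict, LinearMap.subtype_comp_codRestrict]
  have hrange : LinearMap.range (map J 0 (map I 0 g)) =
      LinearMap.ker (map J 0 (δ hf hfg hg I 0)) := by
    rw [hex.linearMap_ker_eq]
    ext x
    constructor
    · rintro ⟨y, rfl⟩
      exact ⟨map J 0 (map I 0 g).rangeRestrict y, hcomp y⟩
    · rintro ⟨y, rfl⟩
      obtain ⟨z, rfl⟩ := hB y
      exact ⟨z, (hcomp z).symm⟩
  exact ⟨(Submodule.quotEquivOfEq _ _ hrange).trans <|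
    LinearMap.quotKerEquivOfSurjective _ fun x ↦
      (exact_map_δ B.injective_subtype (exact_subtype_range_δ hf hfg hg I)
        (δ_surjective_of_injective hf hfg hg I 0) J 0 x).mp (Subsingleton.elim _ _)⟩

end Shift

/-- The corner isomorphism of the Grothendieck spectral sequence
`H^p_J(H^q_I(M)) ⇒ H^{p+q}_{I+J}(M)`, when its terms vanish for `p > d` or `q > t`. -/
theorem nonempty_equiv_of_vanishing [IsNoetherianRing R] (I J : Ideal R) (d t : ℕ)
    (hd : ∀ q p, d < p → Subsingleton (ExtLimit (ExtLimit M I q) J p))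
    (ht : ∀ q, t < q → Subsingleton (ExtLimit M I q)) :
    Nonempty (ExtLimit (ExtLimit M I t) J d ≃ₗ[R] ExtLimit M (I + J) (d + t)) := by
  induction t generalizing M with
  | zero => exact nonempty_equiv_of_acyclic I J d fun q ↦ ht _ q.succ_pos
  | succ t ih =>
    obtain ⟨E, _, _, _, f, hf⟩ := exists_injective_embedding R M
    have hfg := exact_mkQ_range f
    have hg := Submodule.mkQ_surjective (LinearMap.range f)
    set g := (LinearMap.range f).mkQ
    have hE (𝔞 : Ideal R) (q : ℕ) := subsingleton_of_injective (N := E) 𝔞 q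
    have htC (q : ℕ) (hq : t < q + 1) : Subsingleton (ExtLimit (E ⧸ LinearMap.range f) I (q + 1)) :=
      have := ht (q + 2) (by lia)
      subsingleton_right hf hfg hg I (q + 1)
    cases t with
    | zero =>
      obtain ⟨e⟩ := nonempty_equiv_of_acyclic I J d fun q ↦ htC q q.succ_pos
      cases d with
      | zero =>
        have := hd 0 1 one_pos
        have := hd 0 2 two_pos
        obtain ⟨e'⟩ := nonempty_quot_equiv (I := I) (J := J) hf hfg hg
        exact ⟨e'.symm.trans <|
          (quotCompZeroEquiv I J g).trans (quotEquivSucc hf hfg hg (I + J) 0)⟩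
      | succ d =>
        have := hd 0 (d + 2) (by lia)
        have := hd 0 (d + 3) (by lia)
        have := subsingleton_range_map (I := I) (J := J) hf hfg hg d
        have := subsingleton_range_map (I := I) (J := J) hf hfg hg (d + 1)
        exact ⟨(equivOfKernel (Submodule.injective_subtype _) (exact_subtype_range_δ hf hfg hg I)
          (δ_surjective_of_injective hf hfg hg I 0) J (d + 1)).symm.trans <|
            e.trans (equivSucc hf hfg hg (I + J) (d + 1))⟩
    | succ t =>
      obtain ⟨e⟩ := ih (M := E ⧸ LinearMap.range f)
        (subsingleton_extLimit_extLimit_cokernel hf hfg hg hd) fun q hq ↦ by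
          obtain ⟨q, rfl⟩ : ∃ k, q = k + 1 := ⟨q - 1, by lia⟩
          exact htC q hq
      exact ⟨(congr J d (equivSucc hf hfg hg I (t + 1))).symm.trans <|
        e.trans (equivSucc hf hfg hg (I + J) (d + (t + 1)))⟩

end Composition

end ExtLimit

section Comparison

open Limits Opposite

lemma CategoryTheory.ProjectiveResolution.extMk_zero_eq_zero_iff {X Y : ModuleCat.{u} R}
    (P : ProjectiveResolution X) (f : P.complex.X 0 ⟶ Y) (hf : P.complex.d 1 0 ≫ f = 0) :
    P.extMk f 1 rfl hf = 0 ↔ f = 0 := by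
  refine ⟨fun h ↦ ?_, by rintro rfl; exact P.extMk_zero 1 rfl⟩
  rw [← P.extEquivCohomologyClass.apply_eq_iff_eq,
    P.extEquivCohomologyClass_extMk, P.extEquivCohomologyClass_zero,
    CochainComplex.HomComplex.CohomologyClass.mk_eq_zero_iff,
    CochainComplex.HomComplex.Cocycle.toSingleMk_mem_coboundaries_iff _ _ _ _ _ 1 (by lia)] at h
  obtain ⟨g, hg⟩ := h
  have : IsZero (P.cochainComplex.X 1) := P.cochainComplex.isZero_of_isStrictlyLE 0 1
  rw [this.eq_zero_of_src g, comp_zero] at hg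
  rwa [eq_comm, Preadditive.IsIso.comp_left_eq_zero] at hg

namespace ProjectiveResolutionExt

variable {X X' : ModuleCat.{u} R} (P : ProjectiveResolution X) (P' : ProjectiveResolution X')
  (Y : ModuleCat.{u} R) (n : ℕ)

/-- The functor `Hom(-, Y)`, as a covariant functor to the opposite category. -/
abbrev homFunctor : ModuleCat.{u} R ⥤ (ModuleCat.{u} R)ᵒᵖ :=
  ((linearYoneda R (ModuleCat.{u} R)).obj Y).rightOp

/-- The complex `Hom(P, Y)`, as a chain complex in the opposite category. -/
abbrev homComplex : ChainComplex (ModuleCat.{u} R)ᵒᵖ ℕ :=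
  ((homFunctor Y).mapHomologicalComplex _).obj P.complex

/-- The module of cocycles of degree `n` of the complex `Hom(P, Y)`. -/
abbrev cocycles : ModuleCat.{u} R := ((homComplex P Y).opcycles n).unop

/-- The inclusion of cocycles in `Hom(P_n, Y)`. -/
def inclusion : cocycles P Y n ⟶ ModuleCat.of R (P.complex.X n ⟶ Y) :=
  ((homComplex P Y).pOpcycles n).unop

/-- The left derived functors of `Hom(-, Y)` are computed by a projective resolution. -/
def derivedIso : ((homFunctor Y).leftDerived n).obj X ≅ (homComplex P Y).homology n :=
  P.isoLeftDerivedObj (homFunctor Y) n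

/-- The class of a cocycle. -/
def proj : cocycles P Y n ⟶ ((_root_.Ext R (ModuleCat.{u} R) n).obj (op X)).obj Y :=
  ((derivedIso P Y n).hom ≫ (homComplex P Y).homologyι n).unop

lemma inclusion_injective : Function.Injective (inclusion P Y n) :=
  (ModuleCat.mono_iff_injective _).mp
    (inferInstanceAs (Mono ((homComplex P Y).pOpcycles n).unop))

lemma proj_surjective : Function.Surjective (proj P Y n) := by
  have : Mono ((derivedIso P Y n).hom ≫ (homComplex P Y).homologyι n) := mono_comp _ _
  exact (ModuleCat.epi_iff_surjective _).mp (unop_epi_of_mono _)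

variable {P P' Y n}

lemma d_comp_inclusion (z : cocycles P Y n) (m : ℕ) :
    P.complex.d m n ≫ inclusion P Y n z = 0 := by
  have h := congrArg (fun f ↦ f.unop z) ((homComplex P Y).d_pOpcycles m n)
  exact h

lemma exists_inclusion_eq (f : P.complex.X n ⟶ Y) (hf : P.complex.d (n + 1) n ≫ f = 0) :
    ∃ z, inclusion P Y n z = f := by
  let φ : ModuleCat.of R R ⟶ ModuleCat.of R (P.complex.X n ⟶ Y) :=
    ModuleCat.ofHom (LinearMap.toSpanSingleton R _ f)
  have hφ : (homComplex P Y).d (n + 1) n ≫ φ.op = 0 := by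
    apply Quiver.Hom.unop_inj
    ext
    change P.complex.d (n + 1) n ≫ ((1 : R) • f) = 0
    rw [one_smul, hf]
  let ψ := (homComplex P Y).descOpcycles φ.op (n + 1) (by simp) hφ
  refine ⟨ψ.unop (1 : R), ?_⟩
  have := congrArg (fun f ↦ f.unop (1 : R))
    ((homComplex P Y).p_descOpcycles φ.op (n + 1) (by simp) hφ)
  refine this.trans ?_
  exact one_smul R f

lemma proj_eq_zero_iff_zero (z : cocycles P Y 0) :
    proj P Y 0 z = 0 ↔ inclusion P Y 0 z = 0 := by
  have : IsIso ((homComplex P Y).homologyι 0) :=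
    (homComplex P Y).isIso_homologyι 0 0 (by simp) (by simp)
  have : IsIso ((derivedIso P Y 0).hom ≫ (homComplex P Y).homologyι 0) := IsIso.comp_isIso
  have : IsIso (proj P Y 0) := inferInstanceAs (IsIso (Quiver.Hom.unop _))
  have h : Function.Injective (proj P Y 0) := (ModuleCat.mono_iff_injective _).mp inferInstance
  rw [map_eq_zero_iff _ h, map_eq_zero_iff _ (inclusion_injective P Y 0)]

lemma proj_eq_zero_iff_succ (z : cocycles P Y (n + 1)) :
    proj P Y (n + 1) z = 0 ↔ ∃ g : P.complex.X n ⟶ Y,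
      P.complex.d (n + 1) n ≫ g = inclusion P Y (n + 1) z := by
  let S : ShortComplex (ModuleCat.{u} R)ᵒᵖ :=
    ShortComplex.mk ((derivedIso P Y (n + 1)).hom ≫ (homComplex P Y).homologyι (n + 1))
      ((homComplex P Y).fromOpcycles (n + 1) n) (by simp)
  let T : ShortComplex (ModuleCat.{u} R)ᵒᵖ :=
    ShortComplex.mk ((homComplex P Y).homologyι (n + 1))
      ((homComplex P Y).fromOpcycles (n + 1) n)
      ((homComplex P Y).homologyι_comp_fromOpcycles (n + 1) n)
  have hT : T.Exact := T.exact_of_f_is_kernel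
    ((homComplex P Y).homologyIsKernel (n + 1) n (by simp))
  have hS : S.Exact := (ShortComplex.exact_iff_of_iso (ShortComplex.isoMk
    (derivedIso P Y _) (Iso.refl _)
    (Iso.refl _) (by simp [S, T]) (by simp [S, T]) : S ≅ T)).mpr hT
  have key (g : P.complex.X n ⟶ Y) :
      inclusion P Y (n + 1) (((homComplex P Y).fromOpcycles (n + 1) n).unop g) =
        P.complex.d (n + 1) n ≫ g :=
    congrArg (fun f ↦ f.unop g) ((homComplex P Y).p_fromOpcycles (n + 1) n)
  constructor
  · intro hz
    obtain ⟨g, hg⟩ := (ShortComplex.moduleCat_exact_iff _).mp hS.unop z hz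
    exact ⟨g, (key g).symm.trans (congrArg _ hg)⟩
  · rintro ⟨g, hg⟩
    rw [← key] at hg
    rw [← inclusion_injective _ _ _ hg]
    exact congrArg (fun f ↦ f.unop g) S.zero

/-- Functoriality of cocycles in the projective resolution. -/
def cocyclesMap {g : X' ⟶ X} (φ : ProjectiveResolution.Hom P' P g) :
    cocycles P Y n ⟶ cocycles P' Y n :=
  (HomologicalComplex.opcyclesMap
    (((homFunctor Y).mapHomologicalComplex _).map φ.hom) n).unop

lemma inclusion_cocyclesMap {g : X' ⟶ X} (φ : ProjectiveResolution.Hom P' P g)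
    (z : cocycles P Y n) :
    inclusion P' Y n (cocyclesMap φ z) = φ.hom.f n ≫ inclusion P Y n z := by
  have h := congrArg (fun f ↦ f.unop z) (HomologicalComplex.p_opcyclesMap
    (((homFunctor Y).mapHomologicalComplex _).map φ.hom) n)
  exact h

lemma proj_cocyclesMap {g : X' ⟶ X} (φ : ProjectiveResolution.Hom P' P g)
    (z : cocycles P Y n) :
    proj P' Y n (cocyclesMap φ z) =
      ((_root_.Ext R (ModuleCat.{u} R) n).map g.op).app Y (proj P Y n z) := by
  have h : ((homFunctor Y).leftDerived n).map g ≫ (derivedIso P Y n).hom =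
      (derivedIso P' Y n).hom ≫ HomologicalComplex.homologyMap
        (((homFunctor Y).mapHomologicalComplex _).map φ.hom) n :=
    ProjectiveResolution.isoLeftDerivedObj_hom_naturality g P' P φ.hom
      φ.hom_f_zero_comp_π_f_zero (homFunctor Y) n
  have h' : ((homFunctor Y).leftDerived n).map g ≫ (derivedIso P Y n).hom ≫
      (homComplex P Y).homologyι n = ((derivedIso P' Y n).hom ≫ (homComplex P' Y).homologyι n) ≫
        HomologicalComplex.opcyclesMap (((homFunctor Y).mapHomologicalComplex _).map φ.hom) n := by
    rw [reassoc_of% h, HomologicalComplex.homologyι_naturality, Category.assoc]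
  exact (congrArg (fun f ↦ f.unop z) h').symm

variable (P Y n) in
/-- The class of a cocycle in the `Ext`-group defined through the derived category. -/
def extClass : cocycles P Y n →ₗ[R] Ext X Y n where
  toFun z := P.extMk (inclusion P Y n z) (n + 1) rfl (d_comp_inclusion z _)
  map_add' z z' := by
    rw [P.add_extMk]
    congr 1
    exact map_add (inclusion P Y n).hom z z'
  map_smul' r z := by
    rw [RingHom.id_apply, Ext.smul_eq_comp_mk₀, P.extMk_comp_mk₀]
    congr 1
    rw [Linear.comp_smul, Category.comp_id]
    exact map_smul (inclusion P Y n).hom r z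

variable (P Y n) in
lemma extClass_surjective : Function.Surjective (extClass P Y n) := fun α ↦ by
  obtain ⟨f, hf, rfl⟩ := P.extMk_surjective α (n + 1) rfl
  obtain ⟨z, rfl⟩ := exists_inclusion_eq f hf
  exact ⟨z, rfl⟩

variable (P Y n) in
lemma ker_proj_eq_ker_extClass :
    LinearMap.ker (proj P Y n).hom = LinearMap.ker (extClass P Y n) := by
  ext z
  rw [LinearMap.mem_ker, LinearMap.mem_ker]
  cases n with
  | zero =>
    exact (proj_eq_zero_iff_zero z).trans
      (P.extMk_zero_eq_zero_iff _ (d_comp_inclusion z _)).symm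
  | succ n =>
    exact (proj_eq_zero_iff_succ z).trans
      (P.extMk_eq_zero_iff _ _ rfl (d_comp_inclusion z _) n rfl).symm

variable (X Y n) in
/-- The `Ext`-modules defined by deriving `Hom(-, Y)` agree with the ones defined through the
derived category. -/
def extEquiv : ((_root_.Ext R (ModuleCat.{u} R) n).obj (op X)).obj Y ≃ₗ[R] Ext X Y n :=
  ((proj (projectiveResolution X) Y n).hom.quotKerEquivOfSurjective
    (proj_surjective _ Y n)).symm.trans <|
    (Submodule.quotEquivOfEq _ _ (ker_proj_eq_ker_extClass _ Y n)).trans <|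
      (extClass (projectiveResolution X) Y n).quotKerEquivOfSurjective (extClass_surjective _ Y n)

lemma extEquiv_proj (z : cocycles (projectiveResolution X) Y n) :
    extEquiv X Y n (proj (projectiveResolution X) Y n z) =
      extClass (projectiveResolution X) Y n z := by
  have h : ((proj (projectiveResolution X) Y n).hom.quotKerEquivOfSurjective
      (proj_surjective _ Y n)).symm (proj (projectiveResolution X) Y n z) =
      Submodule.Quotient.mk z := by
    rw [LinearEquiv.symm_apply_eq]
    rfl
  rw [extEquiv, LinearEquiv.trans_apply, h]
  rfl

lemma extEquiv_naturality (g : X' ⟶ X)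
    (x : ((_root_.Ext R (ModuleCat.{u} R) n).obj (op X)).obj Y) :
    extEquiv X' Y n (((_root_.Ext R (ModuleCat.{u} R) n).map g.op).app Y x) =
      (Ext.mk₀ g).comp (extEquiv X Y n x) (zero_add n) := by
  obtain ⟨z, rfl⟩ := proj_surjective (projectiveResolution X) Y n x
  let φ : ProjectiveResolution.Hom (projectiveResolution X') (projectiveResolution X) g :=
    { hom := ProjectiveResolution.lift g _ _
      hom_f_zero_comp_π_f_zero :=
        (ProjectiveResolution.lift_commutes_zero g _ _).trans rfl }
  rw [← proj_cocyclesMap φ, extEquiv_proj, extEquiv_proj]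
  refine Eq.trans ?_ (ProjectiveResolution.mk₀_comp_extMk _ _ rfl (d_comp_inclusion z _) φ).symm
  change ProjectiveResolution.extMk _ _ _ rfl (d_comp_inclusion (cocyclesMap φ z) _) = _
  congr 1
  exact inclusion_cocyclesMap φ z

end ProjectiveResolutionExt

open localCohomology in
/-- The cocone exhibiting `ExtLimit N J i` as a colimit of `Ext`-modules. -/
def ExtLimit.cocone (N : ModuleCat.{u} R) (J : Ideal R) (i : ℕ) :
    Cocone (diagram (idealPowersDiagram J) i ⋙ (evaluation _ _).obj N) where
  pt := ModuleCat.of R (ExtLimit N J i)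
  ι :=
    { app n := ModuleCat.ofHom
        (ExtLimit.mk J i n.unop.unop ∘ₗ (ProjectiveResolutionExt.extEquiv _ N i).toLinearMap)
      naturality m n f := by
        ext x
        refine (congrArg (ExtLimit.mk J i n.unop.unop)
          (ProjectiveResolutionExt.extEquiv_naturality
            (quotPowProj J (leOfHom f.unop.unop)) x)).trans ?_
        exact ExtLimit.mk_comp (leOfHom f.unop.unop) _ }

open localCohomology in
/-- The map out of `ExtLimit N J i` induced by a cocone. -/
def ExtLimit.desc {N : ModuleCat.{u} R} {J : Ideal R} {i : ℕ}
    (s : Cocone (diagram (idealPowersDiagram J) i ⋙ (evaluation _ _).obj N)) :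
    ExtLimit N J i →ₗ[R] s.pt :=
  ExtLimit.lift
    (fun n ↦ (s.ι.app (op (op n))).hom ∘ₗ
      (ProjectiveResolutionExt.extEquiv (ModuleCat.of R (R ⧸ J ^ n)) N i).symm.toLinearMap)
    (fun m n h x ↦ by
      obtain ⟨x, rfl⟩ := (ProjectiveResolutionExt.extEquiv _ N i).surjective x
      rw [← ProjectiveResolutionExt.extEquiv_naturality]
      refine (congrArg (s.ι.app (op (op n))).hom (LinearEquiv.symm_apply_apply _ _)).trans ?_
      refine Eq.trans ?_ (congrArg (s.ι.app (op (op m))).hom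
        (LinearEquiv.symm_apply_apply _ _)).symm
      exact congrArg (fun f ↦ f.hom x) (s.w (homOfLE h).op.op))

open localCohomology in
lemma ExtLimit.desc_mk {N : ModuleCat.{u} R} {J : Ideal R} {i : ℕ}
    (s : Cocone (diagram (idealPowersDiagram J) i ⋙ (evaluation _ _).obj N)) (n : ℕ)
    (x : ((_root_.Ext R (ModuleCat.{u} R) i).obj (op (ModuleCat.of R (R ⧸ J ^ n)))).obj N) :
    ExtLimit.desc s (ExtLimit.mk J i n (ProjectiveResolutionExt.extEquiv _ N i x)) =
      (s.ι.app (op (op n))).hom x := by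
  rw [ExtLimit.desc]
  exact (ExtLimit.lift_mk _ _ _ _).trans
    (congrArg (s.ι.app (op (op n))).hom (LinearEquiv.symm_apply_apply _ _))

/-- `ExtLimit N J i` is a colimit of `Ext`-modules. -/
def ExtLimit.isColimitCocone (N : ModuleCat.{u} R) (J : Ideal R) (i : ℕ) :
    IsColimit (ExtLimit.cocone N J i) where
  desc s := ModuleCat.ofHom (ExtLimit.desc s)
  fac s n := by
    ext x
    exact ExtLimit.desc_mk s n.unop.unop x
  uniq s m h := by
    ext x
    obtain ⟨n, y, rfl⟩ := ExtLimit.exists_mk x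
    obtain ⟨y, rfl⟩ := (ProjectiveResolutionExt.extEquiv _ N i).surjective y
    exact (congrArg (fun f ↦ f.hom y) (h (op (op n)))).trans (ExtLimit.desc_mk s n y).symm

open localCohomology in
/-- The two definitions of local cohomology agree. -/
def localCohomologyIso (N : ModuleCat.{u} R) (J : Ideal R) (i : ℕ) :
    (localCohomology J i).obj N ≅ ModuleCat.of R (ExtLimit N J i) :=
  have := hasColimitDiagram.{u, 0} (idealPowersDiagram J) i
  (isColimitOfPreserves ((evaluation _ _).obj N)
    (colimit.isColimit (diagram (idealPowersDiagram J) i))).coconePointUniqueUpToIso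
    (ExtLimit.isColimitCocone N J i)

end Comparison

end

/-- if `dim (R/(I + Ann M)) = d`, `H^{d+t}_{I+J}(M) ≠ 0` and `cd(I,M) = t`,
then `H^d_J(H^t_I(M)) ≅ H^{d+t}_{I+J}(M)`. -/
theorem localCohomology_iso_of_cohomologicalDimension_eq
    (R : Type u) [CommRing R] [IsNoetherianRing R] (I : Ideal R) (M : ModuleCat.{u} R)
    (d t : ℕ) (hd : ringKrullDim (R ⧸ (I + Module.annihilator R M)) = (d : WithBot ℕ∞))
    (J : Ideal R) (hJ : Nontrivial ((localCohomology (I + J) (d + t)).obj M))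
    (hcd : cohomologicalDimension I M = (t : ℕ∞)) :
    Nonempty ((localCohomology J d).obj ((localCohomology I t).obj M) ≅
      (localCohomology (I + J) (d + t)).obj M) := by
  have hvan (q : ℕ) (hq : t < q) : Subsingleton (ExtLimit M I q) := by
    rw [← not_nontrivial_iff_subsingleton]
    intro h
    have : Nontrivial ((localCohomology I q).obj M) :=
      (localCohomologyIso M I q).toLinearEquiv.toEquiv.nontrivial
    have hle : (q : ℕ∞) ≤ t := hcd ▸ le_sSup ⟨q, rfl, this⟩
    exact absurd (ENat.natCast_le_natCast.mp hle) (not_le.mpr hq)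
  obtain ⟨e⟩ := ExtLimit.nonempty_equiv_of_vanishing (M := M) I J d t
    (fun q _ hp ↦ ExtLimit.subsingleton_extLimit_extLimit I J hd q hp) hvan
  exact ⟨localCohomologyIso _ J d ≪≫ LinearEquiv.toModuleIso
    ((ExtLimit.congr J d (localCohomologyIso M I t).toLinearEquiv).trans e) ≪≫
      (localCohomologyIso M (I + J) (d + t)).symm⟩
end

section
/- Let R be a commutative Noetherian ring with unity, M an R-module (not necessarily finitely generated), and I an ideal of R with dim(R/(I + Ann M)) = d, where Ann M is the annihilator of M. Let t ≥ 0 be an integer and let J be an ideal of R such that H^{d+t}_{I+J}(M) ≠ 0. If cd(I,M) = t, then the dimension of the support of H^t_I(M) equals d. -/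
universe u

open CategoryTheory

namespace LocalCohomologyExt

open Abelian

variable {R : Type u} [CommRing R]

/-- The module `R ⧸ J ^ k`. -/
abbrev powQuot (J : Ideal R) (k : ℕ) : ModuleCat.{u} R := ModuleCat.of R (R ⧸ J ^ k)

/-- The projection `R ⧸ J ^ l ⟶ R ⧸ J ^ k` for `k ≤ l`. -/
def powQuotMap (J : Ideal R) {k l : ℕ} (h : k ≤ l) : powQuot J l ⟶ powQuot J k :=
  ModuleCat.ofHom <| Submodule.mapQ _ _ LinearMap.id (Ideal.pow_le_pow_right h)

lemma powQuotMap_comp (J : Ideal R) {k l m : ℕ} (h : k ≤ l) (h' : l ≤ m) :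
    powQuotMap J h' ≫ powQuotMap J h = powQuotMap J (h.trans h') := by
  apply ModuleCat.hom_ext
  apply Submodule.linearMap_qext
  rfl

section restriction

variable {J : Ideal R} {N N' : ModuleCat.{u} R} {i : ℕ}

/-- The transition map `Ext^i (R ⧸ J ^ k, N) → Ext^i (R ⧸ J ^ l, N)` for `k ≤ l`. -/
noncomputable def restrict {k l : ℕ} (h : k ≤ l) (e : Ext (powQuot J k) N i) :
    Ext (powQuot J l) N i :=
  (Ext.mk₀ (powQuotMap J h)).comp e (zero_add i)

lemma restrict_restrict {k l m : ℕ} (h : k ≤ l) (h' : l ≤ m) (e : Ext (powQuot J k) N i) :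
    restrict h' (restrict h e) = restrict (h.trans h') e := by
  simp [restrict, powQuotMap_comp]

@[simp]
lemma restrict_zero {k l : ℕ} (h : k ≤ l) : restrict h (0 : Ext (powQuot J k) N i) = 0 := by
  simp [restrict]

lemma restrict_smul {k l : ℕ} (h : k ≤ l) (r : R) (e : Ext (powQuot J k) N i) :
    restrict h (r • e) = r • restrict h e := by
  simp [restrict]

lemma restrict_comp {k l j m : ℕ} (h : k ≤ l) (e : Ext (powQuot J k) N i)
    (f : Ext N N' j) (hm : i + j = m) :
    restrict h (e.comp f hm) = (restrict h e).comp f hm := by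
  simp only [restrict]
  rw [Ext.comp_assoc]
  omega

lemma restrict_mk₀ {k l : ℕ} (h : k ≤ l) (f : powQuot J k ⟶ N) :
    restrict h (Ext.mk₀ f) = Ext.mk₀ (powQuotMap J h ≫ f) := by
  simp [restrict]

lemma smul_eq_zero_of_mem_pow {k : ℕ} {r : R} (hr : r ∈ J ^ k) (e : Ext (powQuot J k) N i) :
    r • e = 0 := by
  have h : r • 𝟙 (powQuot J k) = 0 := by
    apply ModuleCat.hom_ext
    apply LinearMap.ext
    intro x
    obtain ⟨y, rfl⟩ := Submodule.Quotient.mk_surjective _ x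
    change (Submodule.Quotient.mk (r • y) : R ⧸ J ^ k) = 0
    rw [Submodule.Quotient.mk_eq_zero]
    exact Ideal.mul_mem_right _ _ hr
  have h2 : r • e = (Ext.mk₀ (r • 𝟙 (powQuot J k))).comp e (zero_add i) := by
    rw [Ext.mk₀_smul, Ext.smul_comp, Ext.mk₀_id_comp]
  rw [h2, h, Ext.mk₀_zero, Ext.zero_comp]

end restriction

/-- The morphism `R ⧸ J ^ k ⟶ N` sending `1` to an element `x` killed by `J ^ k`. -/
def elemHom {N : ModuleCat.{u} R} (J : Ideal R) {k : ℕ} (x : N) (hx : ∀ r ∈ J ^ k, r • x = 0) :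
    powQuot J k ⟶ N :=
  ModuleCat.ofHom <| Submodule.liftQ _ (LinearMap.toSpanSingleton R N x) fun r hr => by
    rw [LinearMap.mem_ker, LinearMap.toSpanSingleton_apply, hx r hr]

lemma elemHom_one {N : ModuleCat.{u} R} (J : Ideal R) {k : ℕ} (x : N)
    (hx : ∀ r ∈ J ^ k, r • x = 0) :
    (elemHom J x hx).hom (Submodule.Quotient.mk 1) = x := by
  change (LinearMap.toSpanSingleton R N x) 1 = x
  simp

lemma powQuot_hom_ext {N : ModuleCat.{u} R} {J : Ideal R} {k : ℕ} {f g : powQuot J k ⟶ N}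
    (h : f.hom (Submodule.Quotient.mk 1) = g.hom (Submodule.Quotient.mk 1)) : f = g := by
  ext : 1
  apply Submodule.linearMap_qext
  ext
  exact h

lemma smul_hom_one {N : ModuleCat.{u} R} {J : Ideal R} {k : ℕ} (f : powQuot J k ⟶ N)
    {r : R} (hr : r ∈ J ^ k) : r • f.hom (Submodule.Quotient.mk 1) = 0 := by
  rw [← map_smul, ← Submodule.Quotient.mk_smul, smul_eq_mul, mul_one,
    (Submodule.Quotient.mk_eq_zero _).2 hr, map_zero]

/-- The vanishing of the direct limit of `Ext^i (R ⧸ J ^ k, N)`: every class dies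
after restriction to some higher power of `J`. -/
def Vanishes (J : Ideal R) (i : ℕ) (N : Type u) [AddCommGroup N] [Module R N] : Prop :=
  ∀ (k : ℕ) (e : Ext (powQuot J k) (ModuleCat.of R N) i), ∃ l, ∃ h : k ≤ l, restrict h e = 0

section exactSequence

variable {J : Ideal R} {A B C : Type u} [AddCommGroup A] [AddCommGroup B] [AddCommGroup C]
  [Module R A] [Module R B] [Module R C] {f : A →ₗ[R] B} {g : B →ₗ[R] C}

lemma shortExact (hf : Function.Injective f) (hfg : Function.Exact f g)
    (hg : Function.Surjective g) :
    (ModuleCat.shortComplexOfCompEqZero f g hfg.linearMap_comp_eq_zero).ShortExact :=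
  ModuleCat.shortComplex_shortExact _ hfg hf hg

lemma Vanishes.middle (hf : Function.Injective f) (hfg : Function.Exact f g)
    (hg : Function.Surjective g) {i : ℕ} (hA : Vanishes J i A) (hC : Vanishes J i C) :
    Vanishes J i B := by
  intro k e
  have hS := shortExact hf hfg hg
  obtain ⟨l, hl, h⟩ := hC k (e.comp (Ext.mk₀ (ModuleCat.ofHom g)) (add_zero i))
  rw [restrict_comp] at h
  obtain ⟨a, ha⟩ := Ext.covariant_sequence_exact₂ _ hS (restrict hl e) h
  obtain ⟨m, hm, h'⟩ := hA l a
  refine ⟨m, hl.trans hm, ?_⟩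
  rw [← restrict_restrict hl hm, ← ha, restrict_comp]
  exact (congrArg (fun z => Ext.comp z _ _) h').trans (Ext.zero_comp ..)

lemma Vanishes.left (hf : Function.Injective f) (hfg : Function.Exact f g)
    (hg : Function.Surjective g) {i : ℕ} (hB : Vanishes J (i + 1) B) (hC : Vanishes J i C) :
    Vanishes J (i + 1) A := by
  intro k e
  have hS := shortExact hf hfg hg
  obtain ⟨l, hl, h⟩ := hB k (e.comp (Ext.mk₀ (ModuleCat.ofHom f)) (add_zero _))
  rw [restrict_comp] at h
  obtain ⟨a, ha⟩ := Ext.covariant_sequence_exact₁ _ hS (restrict hl e) h rfl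
  obtain ⟨m, hm, h'⟩ := hC l a
  refine ⟨m, hl.trans hm, ?_⟩
  rw [← restrict_restrict hl hm, ← ha, restrict_comp]
  exact (congrArg (fun z => Ext.comp z _ _) h').trans (Ext.zero_comp ..)

lemma Vanishes.right (hf : Function.Injective f) (hfg : Function.Exact f g)
    (hg : Function.Surjective g) {i : ℕ} (hB : Vanishes J i B) (hA : Vanishes J (i + 1) A) :
    Vanishes J i C := by
  intro k e
  have hS := shortExact hf hfg hg
  obtain ⟨l, hl, h⟩ := hA k (e.comp hS.extClass rfl)
  rw [restrict_comp] at h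
  obtain ⟨a, ha⟩ := Ext.covariant_sequence_exact₃ _ hS (restrict hl e) rfl h
  obtain ⟨m, hm, h'⟩ := hB l a
  refine ⟨m, hl.trans hm, ?_⟩
  rw [← restrict_restrict hl hm, ← ha, restrict_comp]
  exact (congrArg (fun z => Ext.comp z _ _) h').trans (Ext.zero_comp ..)

end exactSequence

lemma Vanishes.of_injective (J : Ideal R) (i : ℕ) (N : Type u) [AddCommGroup N] [Module R N]
    [Module.Injective R N] : Vanishes J (i + 1) N := by
  have := Module.injective_object_of_injective_module R N
  exact fun k e => ⟨k, le_rfl, by rw [Ext.eq_zero_of_injective e, restrict_zero]⟩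

lemma Vanishes.of_subsingleton (J : Ideal R) (i : ℕ) (N : Type u) [AddCommGroup N] [Module R N]
    [Subsingleton N] : Vanishes J i N := by
  intro k e
  refine ⟨k, le_rfl, ?_⟩
  have h : 𝟙 (ModuleCat.of R N) = 0 := by
    ext x
    exact Subsingleton.elim (α := N) _ _
  rw [← Ext.comp_mk₀_id e, h, Ext.mk₀_zero, Ext.comp_zero, restrict_zero]

/-- The submodule of elements killed by some power of `J`. -/
def powTorsion (J : Ideal R) (N : Type u) [AddCommGroup N] [Module R N] : Submodule R N where
  carrier := {x | ∃ k : ℕ, ∀ r ∈ J ^ k, r • x = 0}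
  zero_mem' := ⟨0, fun r _ => smul_zero r⟩
  add_mem' := by
    rintro x y ⟨k, hk⟩ ⟨l, hl⟩
    refine ⟨max k l, fun r hr => ?_⟩
    rw [smul_add, hk r (Ideal.pow_le_pow_right (le_max_left _ _) hr),
      hl r (Ideal.pow_le_pow_right (le_max_right _ _) hr), add_zero]
  smul_mem' := by
    rintro s x ⟨k, hk⟩
    exact ⟨k, fun r hr => by rw [smul_comm, hk r hr, smul_zero]⟩

lemma mem_powTorsion {J : Ideal R} {N : Type u} [AddCommGroup N] [Module R N] {x : N} :
    x ∈ powTorsion J N ↔ ∃ k : ℕ, ∀ r ∈ J ^ k, r • x = 0 := Iff.rfl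

/-- The torsion part of an injective module over a Noetherian ring is injective. -/
instance powTorsion_injective [IsNoetherianRing R] (J : Ideal R) (E : Type u) [AddCommGroup E]
    [Module R E] [Module.Injective R E] : Module.Injective R (powTorsion J E) := by
  apply Module.Baer.injective
  intro a f
  obtain ⟨k, hk⟩ : ∃ k : ℕ, ∀ y ∈ LinearMap.range f, ∀ r ∈ J ^ k, r • y = 0 := by
    obtain ⟨s, hs⟩ := Module.Finite.iff_fg.1 (Module.Finite.range f)
    have hc : ∀ y : powTorsion J E, ∃ k : ℕ, ∀ r ∈ J ^ k, r • y = 0 := by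
      rintro ⟨y, k, hk⟩
      exact ⟨k, fun r hr => Subtype.ext (hk r hr)⟩
    choose c hc using hc
    refine ⟨s.sup c, fun y hy => ?_⟩
    rw [← hs] at hy
    induction hy using Submodule.span_induction with
    | mem y hy => exact fun r hr => hc y r (Ideal.pow_le_pow_right (Finset.le_sup hy) hr)
    | zero => exact fun r _ => smul_zero r
    | add x y _ _ hx hy => exact fun r hr => by rw [smul_add, hx r hr, hy r hr, add_zero]
    | smul t x _ hx => exact fun r hr => by rw [smul_comm, hx r hr, smul_zero]
  obtain ⟨m, hm⟩ := Ideal.exists_pow_inf_eq_pow_smul J a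
  have hm' := hm (m + k) (by omega)
  rw [Nat.add_sub_cancel_left] at hm'
  have hker : ∀ x (hx : x ∈ a), x ∈ J ^ (m + k) → f ⟨x, hx⟩ = 0 := by
    intro x hx hxJ
    have hx' : x ∈ J ^ k • (J ^ m • (⊤ : Submodule R R) ⊓ a) := by
      rw [← hm']
      exact ⟨by simpa using hxJ, hx⟩
    have hle : J ^ k • (J ^ m • (⊤ : Submodule R R) ⊓ a) ≤
        (LinearMap.ker f).map a.subtype := by
      rw [Submodule.smul_le]
      intro r hr n hn
      refine ⟨⟨r • n, a.smul_mem r hn.2⟩, ?_, rfl⟩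
      change f (r • ⟨n, hn.2⟩) = 0
      rw [map_smul]
      exact hk _ ⟨_, rfl⟩ r hr
    obtain ⟨y, hy, rfl⟩ := hle hx'
    exact hy
  let q : a →ₗ[R] R ⧸ J ^ (m + k) := (Submodule.mkQ (J ^ (m + k))).comp a.subtype
  have hq : LinearMap.ker q ≤ LinearMap.ker f := by
    rintro ⟨x, hx⟩ hxq
    exact hker x hx ((Submodule.Quotient.mk_eq_zero _).1 hxq)
  let f' : LinearMap.range q →ₗ[R] E :=
    ((powTorsion J E).subtype.comp ((LinearMap.ker q).liftQ f hq)).comp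
      q.quotKerEquivRange.symm.toLinearMap
  obtain ⟨g, hg⟩ := Module.Injective.out (LinearMap.range q).subtype
    (Submodule.injective_subtype _) f'
  refine ⟨(g.comp (Submodule.mkQ _)).codRestrict _ fun x => ⟨m + k, fun r hr => ?_⟩, ?_⟩
  · rw [LinearMap.comp_apply, ← map_smul, ← map_smul, smul_eq_mul,
      Submodule.mkQ_apply, (Submodule.Quotient.mk_eq_zero _).2 (Ideal.mul_mem_right _ _ hr),
      map_zero]
  · intro x hx
    ext
    have h1 := hg (q.rangeRestrict ⟨x, hx⟩)
    have h2 : q.quotKerEquivRange.symm (q.rangeRestrict ⟨x, hx⟩) =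
        Submodule.Quotient.mk ⟨x, hx⟩ := by
      rw [LinearEquiv.symm_apply_eq]
      rfl
    simp only [f', LinearMap.comp_apply, LinearEquiv.coe_coe, h2] at h1
    exact h1

lemma exists_injective_embedding (N : Type u) [AddCommGroup N] [Module R N] :
    ∃ (E : Type u) (_ : AddCommGroup E) (_ : Module R E) (_ : Module.Injective R E)
      (f : N →ₗ[R] E), Function.Injective f := by
  let E := Injective.under (ModuleCat.of R N)
  have : Injective (ModuleCat.of R E) := inferInstanceAs (Injective E)
  exact ⟨E, inferInstance, inferInstance, Module.injective_module_of_injective_object R E,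
    (Injective.ι (ModuleCat.of R N)).hom, (ModuleCat.mono_iff_injective _).1 inferInstance⟩

section degreeZero

variable {J : Ideal R}

lemma Vanishes.eq_zero {N : Type u} [AddCommGroup N] [Module R N] (hN : Vanishes J 0 N) {x : N}
    (hx : x ∈ powTorsion J N) : x = 0 := by
  obtain ⟨k, hk⟩ := hx
  obtain ⟨l, hl, h⟩ := hN k (Ext.mk₀ (elemHom (N := ModuleCat.of R N) J x hk))
  rw [restrict_mk₀, Ext.mk₀_eq_zero_iff] at h
  rw [← elemHom_one (N := ModuleCat.of R N) J x hk]
  exact congrArg (fun f => f.hom (Submodule.Quotient.mk 1)) h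

lemma vanishes_zero_of_forall {N : Type u} [AddCommGroup N] [Module R N]
    (h : ∀ x ∈ powTorsion J N, x = 0) : Vanishes J 0 N := by
  intro k e
  obtain ⟨f, rfl⟩ := (Ext.mk₀_bijective _ _).2 e
  refine ⟨k, le_rfl, ?_⟩
  have : f = 0 := powQuot_hom_ext (h _ ⟨k, fun r hr => smul_hom_one f hr⟩)
  rw [this, Ext.mk₀_zero, restrict_zero]

variable {A B C : Type u} [AddCommGroup A] [AddCommGroup B] [AddCommGroup C]
  [Module R A] [Module R B] [Module R C] {f : A →ₗ[R] B} {g : B →ₗ[R] C}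

lemma exists_lift_of_restrict_eq_zero (hf : Function.Injective f) (hfg : Function.Exact f g)
    (hg : Function.Surjective g) {k l : ℕ} (u : powQuot J k ⟶ ModuleCat.of R C) (h : k ≤ l)
    (hu : restrict h ((Ext.mk₀ u).comp (shortExact hf hfg hg).extClass (zero_add 1)) = 0) :
    ∃ y : B, (∀ r ∈ J ^ l, r • y = 0) ∧ g y = u.hom (Submodule.Quotient.mk 1) := by
  rw [restrict_comp, restrict_mk₀] at hu
  obtain ⟨v, hv⟩ := Ext.covariant_sequence_exact₃ _ (shortExact hf hfg hg) _ _ hu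
  obtain ⟨v, rfl⟩ := (Ext.mk₀_bijective _ _).2 v
  rw [Ext.mk₀_comp_mk₀] at hv
  have hv' := (Ext.mk₀_bijective _ _).1 hv
  exact ⟨v.hom (Submodule.Quotient.mk 1), fun r hr => smul_hom_one v hr,
    congrArg (fun f => f.hom (Submodule.Quotient.mk 1)) hv'⟩

lemma Vanishes.exists_lift (hf : Function.Injective f) (hfg : Function.Exact f g)
    (hg : Function.Surjective g) (hA : Vanishes J 1 A) {x : C} (hx : x ∈ powTorsion J C) :
    ∃ y ∈ powTorsion J B, g y = x := by
  obtain ⟨k, hk⟩ := hx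
  obtain ⟨l, hl, h⟩ := hA k ((Ext.mk₀ (elemHom (N := ModuleCat.of R C) J x hk)).comp
    (shortExact hf hfg hg).extClass (zero_add 1))
  obtain ⟨y, hy, hyx⟩ := exists_lift_of_restrict_eq_zero hf hfg hg _ hl h
  exact ⟨y, ⟨l, hy⟩, hyx.trans (elemHom_one (N := ModuleCat.of R C) J x hk)⟩

lemma vanishes_one_of_lift [Module.Injective R B] (hf : Function.Injective f)
    (hfg : Function.Exact f g) (hg : Function.Surjective g)
    (h : ∀ x ∈ powTorsion J C, ∃ y ∈ powTorsion J B, g y = x) : Vanishes J 1 A := by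
  intro k e
  have hS := shortExact hf hfg hg
  have := Module.injective_object_of_injective_module R B
  obtain ⟨u, hu⟩ := Ext.covariant_sequence_exact₁ _ hS e
    (Ext.eq_zero_of_injective (I := ModuleCat.of R B) _) (zero_add 1)
  obtain ⟨u, rfl⟩ := (Ext.mk₀_bijective _ _).2 u
  obtain ⟨y, ⟨l, hl⟩, hy⟩ := h _ ⟨k, fun r hr => smul_hom_one u hr⟩
  have hl' : ∀ r ∈ J ^ (max k l), r • y = 0 :=
    fun r hr => hl r (Ideal.pow_le_pow_right (le_max_right _ _) hr)
  refine ⟨max k l, le_max_left _ _, ?_⟩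
  have key : powQuotMap J (le_max_left k l) ≫ u =
      elemHom (N := ModuleCat.of R B) J y hl' ≫ ModuleCat.ofHom g := by
    refine powQuot_hom_ext (hy.symm.trans ?_)
    exact congrArg g (elemHom_one (N := ModuleCat.of R B) J y hl').symm
  have h3 : restrict (le_max_left k l) (Ext.mk₀ u) =
      (Ext.mk₀ (elemHom (N := ModuleCat.of R B) J y hl')).comp
        (Ext.mk₀ (ModuleCat.ofHom g)) (zero_add 0) := by
    rw [restrict_mk₀, Ext.mk₀_comp_mk₀, ← key]
  rw [← hu, restrict_comp]
  refine (congrArg (fun z => Ext.comp z hS.extClass (zero_add 1)) h3).trans ?_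
  refine (Ext.comp_assoc_of_second_deg_zero _ _ _ _).trans ?_
  exact (congrArg (fun z => Ext.comp _ z (zero_add 1)) hS.comp_extClass).trans (Ext.comp_zero ..)

end degreeZero

lemma powTorsion_map_mem {J : Ideal R} {N N' : Type u} [AddCommGroup N] [Module R N]
    [AddCommGroup N'] [Module R N'] (f : N →ₗ[R] N') {x : N} (hx : x ∈ powTorsion J N) :
    f x ∈ powTorsion J N' := by
  obtain ⟨k, hk⟩ := hx
  exact ⟨k, fun r hr => by rw [← map_smul, hk r hr, map_zero]⟩

lemma powTorsion_powTorsion (J : Ideal R) (N : Type u) [AddCommGroup N] [Module R N] :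
    powTorsion J (powTorsion J N) = ⊤ := by
  rw [eq_top_iff]
  rintro ⟨x, k, hk⟩ -
  exact ⟨k, fun r hr => Subtype.ext (hk r hr)⟩

/-- Torsion modules have no higher local cohomology. -/
lemma vanishes_succ_of_powTorsion_eq_top [IsNoetherianRing R] (J : Ideal R) (i : ℕ) (N : Type u)
    [AddCommGroup N] [Module R N] (hN : powTorsion J N = ⊤) : Vanishes J (i + 1) N := by
  induction i generalizing N with
  | zero =>
    obtain ⟨E, _, _, _, f, hf⟩ := exists_injective_embedding (R := R) N
    let f' : N →ₗ[R] powTorsion J E := f.codRestrict _ fun x =>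
      powTorsion_map_mem f (hN ▸ Submodule.mem_top)
    have hf' : Function.Injective f' := fun x y h => hf (congrArg Subtype.val h)
    refine vanishes_one_of_lift (g := (LinearMap.range f').mkQ) hf'
      (LinearMap.exact_map_mkQ_range f') (Submodule.mkQ_surjective _) fun x _ => ?_
    obtain ⟨y, rfl⟩ := Submodule.mkQ_surjective _ x
    exact ⟨y, powTorsion_powTorsion J E ▸ Submodule.mem_top, rfl⟩
  | succ i ih =>
    obtain ⟨E, _, _, _, f, hf⟩ := exists_injective_embedding (R := R) N
    let f' : N →ₗ[R] powTorsion J E := f.codRestrict _ fun x =>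
      powTorsion_map_mem f (hN ▸ Submodule.mem_top)
    have hf' : Function.Injective f' := fun x y h => hf (congrArg Subtype.val h)
    refine Vanishes.left (g := (LinearMap.range f').mkQ) hf'
      (LinearMap.exact_map_mkQ_range f') (Submodule.mkQ_surjective _)
      (Vanishes.of_injective J _ _) (ih _ ?_)
    rw [eq_top_iff]
    rintro x -
    obtain ⟨y, rfl⟩ := Submodule.mkQ_surjective _ x
    exact powTorsion_map_mem _ (powTorsion_powTorsion J E ▸ Submodule.mem_top)

/-- Over a Noetherian ring, `Ext` classes out of a finite module come from finite submodules. -/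
lemma exists_fg_submodule_ext [IsNoetherianRing R] (A : Type u) [AddCommGroup A] [Module R A]
    [Module.Finite R A] (N : Type u) [AddCommGroup N] [Module R N] (i : ℕ)
    (e : Ext (ModuleCat.of R A) (ModuleCat.of R N) i) :
    ∃ (N' : Submodule R N), N'.FG ∧ ∃ e' : Ext (ModuleCat.of R A) (ModuleCat.of R N') i,
      e'.comp (Ext.mk₀ (ModuleCat.ofHom N'.subtype)) (add_zero i) = e := by
  induction i generalizing A with
  | zero =>
    obtain ⟨f, rfl⟩ := (Ext.mk₀_bijective _ _).2 e
    refine ⟨LinearMap.range f.hom, Module.Finite.iff_fg.1 (Module.Finite.range _),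
      Ext.mk₀ (ModuleCat.ofHom f.hom.rangeRestrict), ?_⟩
    rw [Ext.mk₀_comp_mk₀]
    rfl
  | succ i ih =>
    obtain ⟨n, p, hp⟩ := Module.Finite.exists_fin' R A
    let P := Shrink.{u} (Fin n → R)
    let p' : P →ₗ[R] A := p.comp (Shrink.linearEquiv R (Fin n → R)).toLinearMap
    have hp' : Function.Surjective p' := hp.comp (Shrink.linearEquiv R (Fin n → R)).surjective
    have : Module.Finite R P := Module.Finite.equiv (Shrink.linearEquiv R (Fin n → R)).symm
    have : Module.Projective R P :=
      Module.Projective.of_equiv (Shrink.linearEquiv R (Fin n → R)).symm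
    have : Projective (ModuleCat.of R P) := (IsProjective.iff_projective P).1 this
    have hS := shortExact (f := (LinearMap.ker p').subtype) (g := p')
      (Submodule.injective_subtype _) (LinearMap.exact_subtype_ker_map p') hp'
    obtain ⟨e₁, he₁⟩ := Ext.contravariant_sequence_exact₃ hS _ e
      (Ext.eq_zero_of_projective (P := ModuleCat.of R P) _) (add_comm 1 i)
    obtain ⟨N', hN', e', he'⟩ := ih (LinearMap.ker p') e₁
    refine ⟨N', hN', hS.extClass.comp e' (add_comm 1 i), ?_⟩
    rw [← he₁, ← he']
    exact Ext.comp_assoc_of_third_deg_zero ..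

lemma vanishes_of_fg_submodules [IsNoetherianRing R] (J : Ideal R) (i : ℕ) (N : Type u)
    [AddCommGroup N] [Module R N] (h : ∀ N' : Submodule R N, N'.FG → Vanishes J i N') :
    Vanishes J i N := by
  intro k e
  obtain ⟨N', hN', e', rfl⟩ := exists_fg_submodule_ext (R ⧸ J ^ k) N i e
  obtain ⟨l, hl, h'⟩ := h N' hN' k e'
  exact ⟨l, hl, by rw [restrict_comp, h', Ext.zero_comp]⟩

lemma exists_mem_isSMulRegular [IsNoetherianRing R] (J : Ideal R) (N : Type u)
    [AddCommGroup N] [Module R N] [Module.Finite R N] (hN : powTorsion J N = ⊥) :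
    ∃ x ∈ J, IsSMulRegular N x := by
  by_contra! hx
  have hsub : (J : Set R) ⊆ ⋃ p ∈ associatedPrimes R N, p := by
    rw [biUnion_associatedPrimes_eq_compl_regular R N]
    exact fun x h => hx x h
  obtain ⟨p, hp, hJp⟩ := (Ideal.subset_union_prime_finite (associatedPrimes.finite R N) 0 0
    fun p hp _ _ => IsAssociatedPrime.isPrime hp).1 hsub
  obtain ⟨hprime, y, hy⟩ := (isAssociatedPrime_iff_exists_injective_linearMap _ _).1 hp
  have hy0 : y (Submodule.Quotient.mk 1) ∈ powTorsion J N := by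
    refine ⟨1, fun r hr => ?_⟩
    rw [pow_one] at hr
    rw [← map_smul, ← Submodule.Quotient.mk_smul, smul_eq_mul, mul_one,
      (Submodule.Quotient.mk_eq_zero _).2 (hJp hr), map_zero]
  rw [hN, Submodule.mem_bot, map_eq_zero_iff _ hy, Submodule.Quotient.mk_eq_zero] at hy0
  exact hprime.ne_top ((Ideal.eq_top_iff_one _).2 hy0)

lemma powTorsion_quotient_powTorsion [IsNoetherianRing R] (J : Ideal R) (N : Type u)
    [AddCommGroup N] [Module R N] : powTorsion J (N ⧸ powTorsion J N) = ⊥ := by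
  rw [eq_bot_iff]
  intro x hx
  obtain ⟨y, rfl⟩ := Submodule.mkQ_surjective _ x
  obtain ⟨k, hk⟩ := hx
  rw [Submodule.mem_bot, Submodule.mkQ_apply, Submodule.Quotient.mk_eq_zero]
  have hk' : ∀ r ∈ J ^ k, r • y ∈ powTorsion J N := fun r hr =>
    (Submodule.Quotient.mk_eq_zero _).1 (hk r hr)
  obtain ⟨s, hs⟩ := IsNoetherian.noetherian (J ^ k)
  choose! c hc using hk'
  refine ⟨s.sup c + k, fun r hr => ?_⟩
  rw [pow_add] at hr
  refine Submodule.mul_induction_on hr (fun a ha b hb => ?_) fun x y hx hy => ?_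
  · have hle : J ^ k ≤ (LinearMap.toSpanSingleton R N (a • y)).ker := by
      rw [← hs, Submodule.span_le]
      intro b hb
      change b • a • y = 0
      rw [smul_comm]
      exact hc b (hs ▸ Submodule.subset_span hb) a
        (Ideal.pow_le_pow_right (Finset.le_sup hb) ha)
    rw [mul_comm, mul_smul]
    exact hle hb
  · rw [add_smul, hx, hy, add_zero]

open scoped Pointwise in
lemma vanishes_of_isSMulRegular {J : Ideal R} {x : R} (hxJ : x ∈ J) {N : Type u}
    [AddCommGroup N] [Module R N] (hx : IsSMulRegular N x) {i : ℕ}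
    (h : Vanishes J i (QuotSMulTop x N)) : Vanishes J (i + 1) N := by
  have hex : Function.Exact (LinearMap.lsmul R N x) (x • (⊤ : Submodule R N)).mkQ := by
    intro y
    rw [← LinearMap.mem_ker, Submodule.ker_mkQ, Submodule.mem_smul_pointwise_iff_exists]
    simp
  have hx' : Function.Injective (LinearMap.lsmul R N x) := fun _ _ h => hx h
  have hS := shortExact hx' hex (Submodule.mkQ_surjective _)
  have step : ∀ (n k : ℕ) (e : Ext (powQuot J k) (ModuleCat.of R N) (i + 1)),
      x ^ n • e = 0 → ∃ l, ∃ h : k ≤ l, restrict h e = 0 := by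
    intro n
    induction n with
    | zero =>
      exact fun k e he =>
        ⟨k, le_rfl, by rw [← one_smul R e, ← pow_zero x, he, restrict_zero]⟩
    | succ n ih =>
      intro k e he
      have he' : (x ^ n • e).comp (Ext.mk₀ (ModuleCat.ofHom (LinearMap.lsmul R N x)))
          (add_zero _) = 0 := by
        have : ModuleCat.ofHom (LinearMap.lsmul R N x) = x • 𝟙 (ModuleCat.of R N) := rfl
        rw [this, ← Ext.smul_eq_comp_mk₀, smul_smul, ← pow_succ', he]
      obtain ⟨a, ha⟩ := Ext.covariant_sequence_exact₁ _ hS _ he' rfl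
      obtain ⟨l, hl, h'⟩ := h k a
      have h2 : x ^ n • restrict hl e = 0 := by
        rw [← restrict_smul, ← ha, restrict_comp]
        exact (congrArg (fun z => Ext.comp z _ _) h').trans (Ext.zero_comp ..)
      obtain ⟨m, hm, h3⟩ := ih l _ h2
      exact ⟨m, hl.trans hm, by rw [← restrict_restrict hl hm, h3]⟩
  exact fun k e => step k k e (smul_eq_zero_of_mem_pow (Ideal.pow_mem_pow hxJ k) e)

lemma vanishes_of_supportDim_lt_of_finite [IsNoetherianRing R] (J : Ideal R) (n : ℕ) (N : Type u)
    [AddCommGroup N] [Module R N] [Module.Finite R N] (hN : Module.supportDim R N < n) :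
    Vanishes J n N := by
  induction n generalizing N with
  | zero =>
    have : Subsingleton N := by
      rw [← Module.supportDim_eq_bot_iff_subsingleton (R := R)]
      exact Order.krullDim_eq_bot_iff.2
        (not_nonempty_iff.1 (Order.krullDim_nonneg_iff.not.1 (not_le.2 hN)))
    exact Vanishes.of_subsingleton J 0 N
  | succ n ih =>
    refine Vanishes.middle (f := (powTorsion J N).subtype) (g := (powTorsion J N).mkQ)
      (Submodule.injective_subtype _) (LinearMap.exact_subtype_mkQ _)
      (Submodule.mkQ_surjective _)
      (vanishes_succ_of_powTorsion_eq_top J n _ (powTorsion_powTorsion J N)) ?_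
    obtain ⟨x, hxJ, hx⟩ := exists_mem_isSMulRegular J _ (powTorsion_quotient_powTorsion J N)
    refine vanishes_of_isSMulRegular hxJ hx (ih _ ?_)
    have h1 := Module.supportDim_quotSMulTop_succ_le_of_notMem_minimalPrimes
      (R := R) (M := N ⧸ powTorsion J N) (x := x) (fun _ => hx.notMem_of_mem_minimalPrimes)
    have h2 := Module.supportDim_le_of_surjective (powTorsion J N).mkQ
      (Submodule.mkQ_surjective _)
    have h3 := (h1.trans h2).trans_lt hN
    generalize Module.supportDim R (QuotSMulTop x (N ⧸ powTorsion J N)) = a at h3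
    cases a with
    | bot => exact WithBot.bot_lt_coe _
    | coe a =>
      cases a with
      | top => exact absurd h3 (not_lt.2 (le_top (a := ((n + 1 : ℕ) : WithBot ℕ∞))))
      | coe a =>
        norm_cast at h3 ⊢
        exact Nat.lt_of_succ_lt_succ h3

/-- **Grothendieck's vanishing theorem**, for modules that need not be finitely generated. -/
theorem vanishes_of_supportDim_lt [IsNoetherianRing R] (J : Ideal R) (n : ℕ) (N : Type u)
    [AddCommGroup N] [Module R N] (hN : Module.supportDim R N < n) : Vanishes J n N := by
  refine vanishes_of_fg_submodules J n N fun N' hN' => ?_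
  have := Module.Finite.iff_fg.2 hN'
  exact vanishes_of_supportDim_lt_of_finite J n N'
    ((Module.supportDim_le_of_injective N'.subtype N'.injective_subtype).trans_lt hN)

/-- The support of the direct limit of `Ext^q (R ⧸ I ^ k, N)`. -/
def extSupport (I : Ideal R) (q : ℕ) (N : Type u) [AddCommGroup N] [Module R N] :
    Set (PrimeSpectrum R) :=
  {p | ∃ (k : ℕ) (e : Ext (powQuot I k) (ModuleCat.of R N) q),
    ∀ s ∉ p.asIdeal, ∀ l (h : k ≤ l), s • restrict h e ≠ 0}

/-- The map induced on torsion submodules. -/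
def powTorsionMap (I : Ideal R) {N N' : Type u} [AddCommGroup N] [Module R N]
    [AddCommGroup N'] [Module R N'] (f : N →ₗ[R] N') : powTorsion I N →ₗ[R] powTorsion I N' :=
  f.restrict fun _ => powTorsion_map_mem f

lemma krullDim_mono_of_subset {s t : Set (PrimeSpectrum R)} (h : s ⊆ t) :
    Order.krullDim s ≤ Order.krullDim t :=
  Order.krullDim_le_of_strictMono (Set.inclusion h) fun _ _ h => h

lemma eq_empty_of_krullDim_lt_zero {s : Set (PrimeSpectrum R)} (h : Order.krullDim s < 0) :
    s = ∅ := by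
  rw [← Set.isEmpty_coe_sort, ← not_nonempty_iff, ← Order.krullDim_nonneg_iff]
  exact not_le.2 h

section exactSequence

variable {I : Ideal R} {A B C : Type u} [AddCommGroup A] [AddCommGroup B] [AddCommGroup C]
  [Module R A] [Module R B] [Module R C] {f : A →ₗ[R] B} {g : B →ₗ[R] C}

lemma extSupport_succ_subset [Module.Injective R B] (hf : Function.Injective f)
    (hfg : Function.Exact f g) (hg : Function.Surjective g) (q : ℕ) :
    extSupport I (q + 1) C ⊆ extSupport I (q + 2) A := by
  rintro p ⟨k, e, he⟩
  have hS := shortExact hf hfg hg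
  have := Module.injective_object_of_injective_module R B
  refine ⟨k, e.comp hS.extClass rfl, fun s hs l h h0 => he s hs l h ?_⟩
  rw [restrict_comp, ← Ext.smul_comp] at h0
  obtain ⟨a, ha⟩ := Ext.covariant_sequence_exact₃ _ hS _ _ h0
  rw [← ha, Ext.eq_zero_of_injective (I := ModuleCat.of R B) a]
  exact Ext.zero_comp ..

lemma support_quotient_range_powTorsionMap_subset (hf : Function.Injective f)
    (hfg : Function.Exact f g) (hg : Function.Surjective g) :
    Module.support R (powTorsion I C ⧸ LinearMap.range (powTorsionMap I g)) ⊆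
      extSupport I 1 A := by
  intro p hp
  obtain ⟨x, hx⟩ := Module.mem_support_iff'.1 hp
  obtain ⟨⟨x, k, hk⟩, rfl⟩ := Submodule.mkQ_surjective _ x
  have hS := shortExact hf hfg hg
  refine ⟨k, (Ext.mk₀ (elemHom (N := ModuleCat.of R C) I x hk)).comp hS.extClass (zero_add 1),
    fun s hs l h h0 => hx s hs ?_⟩
  rw [← restrict_smul, ← Ext.smul_comp, ← Ext.mk₀_smul] at h0
  obtain ⟨y, hy, hyx⟩ := exists_lift_of_restrict_eq_zero hf hfg hg _ h h0
  rw [← map_smul, Submodule.mkQ_apply, Submodule.Quotient.mk_eq_zero]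
  refine ⟨⟨y, l, hy⟩, Subtype.ext (hyx.trans ?_)⟩
  exact congrArg (fun z : C => s • z) (elemHom_one (N := ModuleCat.of R C) I x hk)

lemma powTorsionMap_injective (hf : Function.Injective f) :
    Function.Injective (powTorsionMap I f) :=
  fun _ _ h => Subtype.ext (hf (congrArg Subtype.val h))

lemma powTorsionMap_exact (hf : Function.Injective f) (hfg : Function.Exact f g) :
    Function.Exact (powTorsionMap I f) (powTorsionMap I g).rangeRestrict := by
  rintro ⟨y, k, hk⟩
  constructor
  · intro h
    obtain ⟨x, rfl⟩ := (hfg y).1 (congrArg (fun z => (z.1 : C)) h)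
    refine ⟨⟨x, k, fun r hr => hf ?_⟩, rfl⟩
    rw [map_smul, hk r hr, map_zero]
  · rintro ⟨x, hx⟩
    refine Subtype.ext (Subtype.ext ?_)
    exact (congrArg (fun z => g z.1) hx.symm).trans (hfg.apply_apply_eq_zero x.1)

end exactSequence

lemma mem_powTorsion_add_iff {I J : Ideal R} {N : Type u} [AddCommGroup N] [Module R N] {x : N} :
    x ∈ powTorsion (I + J) N ↔ x ∈ powTorsion I N ∧ x ∈ powTorsion J N := by
  constructor
  · rintro ⟨k, hk⟩
    exact ⟨⟨k, fun r hr => hk r (Ideal.pow_right_mono le_sup_left k hr)⟩,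
      ⟨k, fun r hr => hk r (Ideal.pow_right_mono le_sup_right k hr)⟩⟩
  · rintro ⟨⟨k, hk⟩, ⟨l, hl⟩⟩
    refine ⟨k + l, fun r hr => ?_⟩
    obtain ⟨a, ha, b, hb, rfl⟩ := Submodule.mem_sup.1 (Ideal.sup_pow_add_le_pow_sup_pow hr)
    rw [add_smul, hk a ha, hl b hb, add_zero]

lemma coe_mem_powTorsion_iff {J : Ideal R} {N : Type u} [AddCommGroup N] [Module R N]
    {N' : Submodule R N} {x : N'} : (x : N) ∈ powTorsion J N ↔ x ∈ powTorsion J N' := by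
  simp only [mem_powTorsion, ← Submodule.coe_smul, ZeroMemClass.coe_eq_zero]

/-- A vanishing criterion replacing the spectral sequence of the composite of the torsion
functors of `I` and `J`. -/
theorem vanishes_add [IsNoetherianRing R] (I J : Ideal R) (n : ℕ) (N : Type u) [AddCommGroup N]
    [Module R N] (h₀ : Vanishes J n (powTorsion I N))
    (h : ∀ p q : ℕ, p + (q + 1) = n → Order.krullDim (extSupport I (q + 1) N) < p) :
    Vanishes (I + J) n N := by
  induction n generalizing N with
  | zero =>
    refine vanishes_zero_of_forall fun x hx => ?_
    rw [mem_powTorsion_add_iff] at hx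
    exact congrArg Subtype.val
      (h₀.eq_zero (x := ⟨x, hx.1⟩) (coe_mem_powTorsion_iff.1 hx.2))
  | succ n ih =>
    obtain ⟨E, _, _, _, f, hf⟩ := exists_injective_embedding (R := R) N
    let g := (LinearMap.range f).mkQ
    have hfg : Function.Exact f g := LinearMap.exact_map_mkQ_range f
    have hg : Function.Surjective g := Submodule.mkQ_surjective _
    have hs := support_quotient_range_powTorsionMap_subset (I := I) hf hfg hg
    have hdim := (krullDim_mono_of_subset hs).trans_lt (h n 0 rfl)
    have hf' := powTorsionMap_injective (I := I) hf
    have hfg' := powTorsionMap_exact (I := I) hf hfg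
    have hg' := (powTorsionMap I g).surjective_rangeRestrict
    cases n with
    | zero =>
      refine vanishes_one_of_lift hf hfg hg fun x hx => ?_
      rw [mem_powTorsion_add_iff] at hx
      have hr : (⟨x, hx.1⟩ : powTorsion I _) ∈ LinearMap.range (powTorsionMap I g) := by
        have := Module.support_eq_empty_iff.1 (eq_empty_of_krullDim_lt_zero hdim)
        rw [← Submodule.Quotient.mk_eq_zero]
        exact Subsingleton.elim _ _
      obtain ⟨y, hy, hyx⟩ := h₀.exists_lift hf' hfg' hg' (x := ⟨_, hr⟩)
        (coe_mem_powTorsion_iff.1 (coe_mem_powTorsion_iff.1 hx.2))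
      exact ⟨y, mem_powTorsion_add_iff.2 ⟨y.2, coe_mem_powTorsion_iff.2 hy⟩,
        congrArg (fun z => z.1.1) hyx⟩
    | succ n =>
      refine Vanishes.left hf hfg hg (Vanishes.of_injective _ _ _) (ih _ ?_ fun p q hpq => ?_)
      · exact Vanishes.middle (Submodule.injective_subtype _) (LinearMap.exact_subtype_mkQ _)
          (Submodule.mkQ_surjective _)
          (Vanishes.right hf' hfg' hg' (Vanishes.of_injective _ _ _) h₀)
          (vanishes_of_supportDim_lt J _ _ hdim)
      · exact (krullDim_mono_of_subset (extSupport_succ_subset hf hfg hg q)).trans_lt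
          (h p (q + 1) (by omega))

section cocycles

variable (K L : CochainComplex (ModuleCat.{u} R) ℕ) (n : ℕ)

/-- Cocycles of a complex of modules, given by elements. -/
noncomputable def liftCocycle :
    ModuleCat.of R (LinearMap.ker (K.d n (n + 1)).hom) ⟶ K.cycles n :=
  K.liftCycles (ModuleCat.ofHom (LinearMap.ker (K.d n (n + 1)).hom).subtype) (n + 1)
    (by simp) (by ext x; exact x.2)

/-- The cohomology class of a cocycle in a complex of modules. -/
noncomputable def cocycleClass : LinearMap.ker (K.d n (n + 1)).hom →ₗ[R] K.homology n :=
  (liftCocycle K n ≫ K.homologyπ n).hom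

lemma iCycles_liftCocycle (x : LinearMap.ker (K.d n (n + 1)).hom) :
    (K.iCycles n).hom ((liftCocycle K n).hom x) = x := by
  have h := K.liftCycles_i (ModuleCat.ofHom (LinearMap.ker (K.d n (n + 1)).hom).subtype) (n + 1)
    (by simp) (by ext x; exact x.2)
  exact congrArg (fun f => f.hom x) h

lemma iCycles_injective : Function.Injective (K.iCycles n).hom :=
  (ModuleCat.mono_iff_injective (K.iCycles n)).1 inferInstance

lemma cocycleClass_surjective : Function.Surjective (cocycleClass K n) := by
  intro a
  obtain ⟨c, rfl⟩ := (ModuleCat.epi_iff_surjective (K.homologyπ n)).1 inferInstance a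
  have hc : (K.iCycles n ≫ K.d n (n + 1)).hom c = 0 := by
    rw [K.iCycles_d]
    rfl
  exact ⟨⟨(K.iCycles n).hom c, hc⟩, congrArg (K.homologyπ n).hom
    (iCycles_injective K n (iCycles_liftCocycle K n _))⟩

lemma cocycleClass_eq_zero_iff (x : LinearMap.ker (K.d n (n + 1)).hom) :
    cocycleClass K n x = 0 ↔ ∃ y, (K.d ((ComplexShape.up ℕ).prev n) n).hom y = x := by
  have hex := (ShortComplex.exact_of_g_is_cokernel
    (ShortComplex.mk _ _ (K.toCycles_comp_homologyπ ((ComplexShape.up ℕ).prev n) n))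
    (K.homologyIsCokernel _ n rfl))
  rw [ShortComplex.ShortExact.moduleCat_exact_iff_function_exact] at hex
  refine (hex _).trans (exists_congr fun y => ?_)
  rw [← (iCycles_injective K n).eq_iff]
  have h : (K.iCycles n).hom ((K.toCycles _ n).hom y) =
      (K.d ((ComplexShape.up ℕ).prev n) n).hom y :=
    congrArg (fun f => f.hom y) (K.toCycles_i _ n)
  exact ⟨fun h' => h.symm.trans (h'.trans (iCycles_liftCocycle K n x)),
    fun h' => h.trans (h'.trans (iCycles_liftCocycle K n x).symm)⟩

variable {K L n}

lemma homologyMap_cocycleClass (φ : K ⟶ L) (x : LinearMap.ker (K.d n (n + 1)).hom)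
    (y : LinearMap.ker (L.d n (n + 1)).hom) (hxy : (φ.f n).hom x = y) :
    (HomologicalComplex.homologyMap φ n).hom (cocycleClass K n x) = cocycleClass L n y := by
  have h₁ := congrArg (fun f => f.hom ((liftCocycle K n).hom x))
    (HomologicalComplex.homologyπ_naturality φ n)
  have h₂ := congrArg (fun f => f.hom ((liftCocycle K n).hom x))
    (HomologicalComplex.cyclesMap_i φ n)
  exact h₁.trans (congrArg (L.homologyπ n).hom (iCycles_injective L n (h₂.trans
    ((congrArg (φ.f n).hom (iCycles_liftCocycle K n x)).trans
      (hxy.trans (iCycles_liftCocycle L n y).symm)))))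

end cocycles

section comparison

variable {X X' Y : ModuleCat.{u} R} (P : ProjectiveResolution X) (P' : ProjectiveResolution X')

/-- Precomposition with a morphism of chain complexes. -/
noncomputable def linearYonedaObjMap {K K' : ChainComplex (ModuleCat.{u} R) ℕ} (φ : K ⟶ K')
    (Y : ModuleCat.{u} R) : K'.linearYonedaObj R Y ⟶ K.linearYonedaObj R Y :=
  (HomologicalComplex.unopFunctor _ _).map
    ((((linearYoneda R _).obj Y).rightOp.mapHomologicalComplex _).map φ).op

lemma isoExt_naturality {f : X ⟶ X'} (φ : P.Hom P' f) (n : ℕ) :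
    ((_root_.Ext R (ModuleCat.{u} R) n).map f.op).app Y ≫ (P.isoExt n Y).hom =
      (P'.isoExt n Y).hom ≫
        HomologicalComplex.homologyMap (linearYonedaObjMap φ.hom Y) n := by
  let F := ((linearYoneda R (ModuleCat.{u} R)).obj Y).rightOp
  let Fφ := (F.mapHomologicalComplex (ComplexShape.down ℕ)).map φ.hom
  have h1 := P.isoLeftDerivedObj_inv_naturality f P' φ.hom (by simpa using φ.2) F n
  have h1' : ((F.leftDerived n).map f).unop ≫ (P.isoLeftDerivedObj F n).inv.unop =
      (P'.isoLeftDerivedObj F n).inv.unop ≫ (HomologicalComplex.homologyMap Fφ n).unop :=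
    congrArg Quiver.Hom.unop h1
  have h2 := HomologicalComplex.homologyOp_hom_naturality (linearYonedaObjMap φ.hom Y) n
  have h2' : HomologicalComplex.homologyMap (linearYonedaObjMap φ.hom Y) n ≫
      (HomologicalComplex.homologyUnop
        ((F.mapHomologicalComplex (ComplexShape.down ℕ)).obj P.complex) n).hom =
      (HomologicalComplex.homologyUnop
        ((F.mapHomologicalComplex (ComplexShape.down ℕ)).obj P'.complex) n).hom ≫
        (HomologicalComplex.homologyMap Fφ n).unop :=
    congrArg Quiver.Hom.unop h2.symm
  have h3 := (Iso.eq_inv_comp _).2 ((Category.assoc _ _ _).symm.trans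
    ((Iso.comp_inv_eq _).2 h2'.symm))
  exact ((CommSq.mk h1'.symm).horiz_comp (CommSq.mk h3.symm)).w.symm

lemma extMk_zero_eq_zero_iff (f : P.complex.X 0 ⟶ Y) (hf : P.complex.d 1 0 ≫ f = 0) :
    P.extMk f 1 rfl hf = 0 ↔ f = 0 := by
  refine ⟨fun h => ?_, fun h => by subst h; exact P.extMk_zero 1 rfl⟩
  rw [← P.extEquivCohomologyClass.apply_eq_iff_eq,
    P.extEquivCohomologyClass_extMk, P.extEquivCohomologyClass_zero,
    CochainComplex.HomComplex.CohomologyClass.mk_eq_zero_iff,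
    CochainComplex.HomComplex.Cocycle.toSingleMk_mem_coboundaries_iff _ _ _ _ _ 1 (by simp)] at h
  obtain ⟨g, hg⟩ := h
  have h0 : Limits.IsZero (P.cochainComplex.X 1) :=
    CochainComplex.isZero_of_isStrictlyLE P.cochainComplex 0 1 
  rw [h0.eq_of_src g 0, Limits.comp_zero] at hg
  rw [← cancel_epi (P.cochainComplexXIso (-(0 : ℕ)) 0 rfl).hom, ← hg, Limits.comp_zero]

lemma extMk_smul {n : ℕ} (r : R) (f : P.complex.X n ⟶ Y) (hf : P.complex.d (n + 1) n ≫ f = 0) :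
    P.extMk (r • f) (n + 1) rfl (by simp [hf]) = r • P.extMk f (n + 1) rfl hf := by
  rw [Ext.smul_eq_comp_mk₀, ProjectiveResolution.extMk_comp_mk₀]
  simp

/-- The `Ext` class of a cocycle with respect to a projective resolution. -/
noncomputable def extMkLinear (n : ℕ) (Y : ModuleCat.{u} R) :
    LinearMap.ker ((P.complex.linearYonedaObj R Y).d n (n + 1)).hom →ₗ[R] Ext X Y n where
  toFun f := P.extMk f.1 (n + 1) rfl f.2
  map_add' _ _ := (P.add_extMk ..).symm
  map_smul' r _ := extMk_smul P r _ _

lemma extMkLinear_surjective (n : ℕ) (Y : ModuleCat.{u} R) :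
    Function.Surjective (extMkLinear P n Y) := by
  intro e
  obtain ⟨f, hf, rfl⟩ := P.extMk_surjective e (n + 1) rfl
  exact ⟨⟨f, hf⟩, rfl⟩

lemma ker_cocycleClass_eq_ker_extMkLinear (n : ℕ) (Y : ModuleCat.{u} R) :
    LinearMap.ker (cocycleClass (P.complex.linearYonedaObj R Y) n) =
      LinearMap.ker (extMkLinear P n Y) := by
  ext ⟨f, hf⟩
  rw [LinearMap.mem_ker, LinearMap.mem_ker, cocycleClass_eq_zero_iff]
  cases n with
  | zero =>
    refine Iff.trans ?_ (extMk_zero_eq_zero_iff P f hf).symm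
    have h : (P.complex.linearYonedaObj R Y).d ((ComplexShape.up ℕ).prev 0) 0 = 0 :=
      HomologicalComplex.shape _ _ _ (by simp)
    rw [h]
    exact ⟨fun ⟨_, h⟩ => h.symm, fun h => ⟨0, h.symm⟩⟩
  | succ n =>
    refine Iff.trans ?_ (P.extMk_eq_zero_iff f _ rfl hf n rfl).symm
    rw [CochainComplex.prev_nat_succ]
    rfl

/-- The comparison between the cohomology of `Hom (P, Y)` and `Ext` groups. -/
noncomputable def homologyEquivExt (n : ℕ) (Y : ModuleCat.{u} R) :
    (P.complex.linearYonedaObj R Y).homology n ≃ₗ[R] Ext X Y n :=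
  ((cocycleClass _ n).quotKerEquivOfSurjective (cocycleClass_surjective _ n)).symm ≪≫ₗ
    Submodule.quotEquivOfEq _ _ (ker_cocycleClass_eq_ker_extMkLinear P n Y) ≪≫ₗ
    (extMkLinear P n Y).quotKerEquivOfSurjective (extMkLinear_surjective P n Y)

lemma homologyEquivExt_cocycleClass (n : ℕ) (Y : ModuleCat.{u} R)
    (x : LinearMap.ker ((P.complex.linearYonedaObj R Y).d n (n + 1)).hom) :
    homologyEquivExt P n Y (cocycleClass _ n x) = extMkLinear P n Y x := by
  have h : ((cocycleClass _ n).quotKerEquivOfSurjective (cocycleClass_surjective _ n)).symm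
      (cocycleClass _ n x) = Submodule.Quotient.mk x := by
    rw [LinearEquiv.symm_apply_eq]
    rfl
  simp only [homologyEquivExt, LinearEquiv.trans_apply, h]
  rfl

lemma homologyEquivExt_naturality {f : X ⟶ X'} (φ : P.Hom P' f) (n : ℕ)
    (a : (P'.complex.linearYonedaObj R Y).homology n) :
    homologyEquivExt P n Y
      ((HomologicalComplex.homologyMap (linearYonedaObjMap φ.hom Y) n).hom a) =
      (Ext.mk₀ f).comp (homologyEquivExt P' n Y a) (zero_add n) := by
  obtain ⟨⟨x, hx⟩, rfl⟩ := cocycleClass_surjective _ _ a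
  have h (z : P'.complex.X n ⟶ Y) (hz : P'.complex.d (n + 1) n ≫ z = 0) :
      P.complex.d (n + 1) n ≫ φ.hom.f n ≫ z = 0 := by
    rw [← φ.hom.comm_assoc, hz, Limits.comp_zero]
  rw [homologyMap_cocycleClass _ _ ⟨φ.hom.f n ≫ x, h x hx⟩ rfl,
    homologyEquivExt_cocycleClass, homologyEquivExt_cocycleClass]
  exact (P'.mk₀_comp_extMk x _ rfl hx φ).symm

/-- The comparison between the two definitions of `Ext` for modules. -/
noncomputable def derivedExtEquiv (n : ℕ) (X Y : ModuleCat.{u} R) :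
    ((_root_.Ext R (ModuleCat.{u} R) n).obj (Opposite.op X)).obj Y ≃ₗ[R] Ext X Y n :=
  ((projectiveResolution X).isoExt n Y).toLinearEquiv ≪≫ₗ
    homologyEquivExt (projectiveResolution X) n Y

lemma derivedExtEquiv_naturality (n : ℕ) (f : X ⟶ X')
    (a : ((_root_.Ext R (ModuleCat.{u} R) n).obj (Opposite.op X')).obj Y) :
    derivedExtEquiv n X Y ((((_root_.Ext R (ModuleCat.{u} R) n).map f.op).app Y).hom a) =
      (Ext.mk₀ f).comp (derivedExtEquiv n X' Y a) (zero_add n) := by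
  let φ : (projectiveResolution X).Hom (projectiveResolution X') f :=
    ⟨ProjectiveResolution.lift f _ _, ProjectiveResolution.lift_commutes_zero f _ _⟩
  have h := congrArg (fun g => g.hom a) (isoExt_naturality (Y := Y) _ _ φ n)
  exact (congrArg (homologyEquivExt _ n Y) h).trans (homologyEquivExt_naturality _ _ φ n _)

end comparison

section colimit

instance preservesColimitsOfShape_forget :
    Limits.PreservesColimitsOfShape ℕᵒᵖᵒᵖ (forget (ModuleCat.{u} R)) :=
  have := Limits.preservesSmallestFilteredColimits_of_preservesFilteredColimits
    (forget (ModuleCat.{u} R))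
  Limits.PreservesFilteredColimitsOfSize.preserves_filtered_colimits _

variable (J : Ideal R) (i : ℕ) (M : ModuleCat.{u} R)

/-- Local cohomology of `M` as a cocone over the groups `Ext^i (R ⧸ J ^ k, M)`. -/
noncomputable def localCohomologyCocone :
    Limits.Cocone (localCohomology.diagram (localCohomology.idealPowersDiagram J) i ⋙
      (evaluation _ _).obj M) :=
  ((evaluation _ _).obj M).mapCocone
    (Limits.colimit.cocone (localCohomology.diagram (localCohomology.idealPowersDiagram J) i))

/-- Local cohomology of `M` is the direct limit of the groups `Ext^i (R ⧸ J ^ k, M)`. -/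
noncomputable def isColimitLocalCohomologyCocone :
    Limits.IsColimit (localCohomologyCocone J i M) :=
  Limits.isColimitOfPreserves ((evaluation _ _).obj M) (Limits.colimit.isColimit _)

variable {J i M}

/-- The map from `Ext^i (R ⧸ J ^ k, M)` to local cohomology. -/
noncomputable def toLocalCohomology (k : ℕ) :
    Ext (powQuot J k) M i →ₗ[R] (localCohomology J i).obj M :=
  ((localCohomologyCocone J i M).ι.app (Opposite.op (Opposite.op k))).hom ∘ₗ
    (derivedExtEquiv i (powQuot J k) M).symm.toLinearMap

lemma exists_toLocalCohomology_eq (a : (localCohomology J i).obj M) :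
    ∃ (k : ℕ) (e : Ext (powQuot J k) M i), toLocalCohomology k e = a := by
  obtain ⟨k, x, hx⟩ :=
    Limits.Concrete.isColimit_exists_rep _ (isColimitLocalCohomologyCocone J i M) a
  refine ⟨k.unop.unop, derivedExtEquiv i (powQuot J k.unop.unop) M x, ?_⟩
  rw [← hx]
  exact congrArg ((localCohomologyCocone J i M).ι.app k).hom
    ((derivedExtEquiv i (powQuot J k.unop.unop) M).symm_apply_apply x)

lemma map_derivedExtEquiv_symm {k l : ℕ} (h : k ≤ l) (e : Ext (powQuot J k) M i) :
    ((((_root_.Ext R (ModuleCat.{u} R) i).map (powQuotMap J h).op).app M).hom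
      ((derivedExtEquiv i (powQuot J k) M).symm e)) =
      (derivedExtEquiv i (powQuot J l) M).symm (restrict h e) := by
  rw [LinearEquiv.eq_symm_apply, derivedExtEquiv_naturality, LinearEquiv.apply_symm_apply]
  rfl

lemma toLocalCohomology_restrict {k l : ℕ} (h : k ≤ l) (e : Ext (powQuot J k) M i) :
    toLocalCohomology l (restrict h e) = toLocalCohomology k e := by
  have hw := (localCohomologyCocone J i M).w (homOfLE h).op.op
  refine Eq.trans ?_ (congrArg (fun f => f.hom ((derivedExtEquiv i (powQuot J k) M).symm e)) hw)
  exact congrArg ((localCohomologyCocone J i M).ι.app (Opposite.op (Opposite.op l))).hom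
    (map_derivedExtEquiv_symm h e).symm

lemma toLocalCohomology_eq_zero {k : ℕ} {e : Ext (powQuot J k) M i}
    (he : toLocalCohomology k e = 0) : ∃ l, ∃ h : k ≤ l, restrict h e = 0 := by
  obtain ⟨l, f, g, h⟩ := Limits.Concrete.isColimit_exists_of_rep_eq _
    (isColimitLocalCohomologyCocone J i M) (i := Opposite.op (Opposite.op k))
    (j := Opposite.op (Opposite.op k)) ((derivedExtEquiv i (powQuot J k) M).symm e) 0
    (he.trans (map_zero _).symm)
  have hkl : k ≤ l.unop.unop := f.unop.unop.le
  refine ⟨l.unop.unop, hkl, ?_⟩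
  rw [← (derivedExtEquiv i (powQuot J l.unop.unop) M).symm.map_eq_zero_iff,
    ← map_derivedExtEquiv_symm]
  exact h.trans (map_zero _)

end colimit

lemma Vanishes.subsingleton_localCohomology {J : Ideal R} {i : ℕ} {M : ModuleCat.{u} R}
    (h : Vanishes J i M) : Subsingleton ((localCohomology J i).obj M) := by
  refine subsingleton_of_forall_eq 0 fun a => ?_
  obtain ⟨k, e, rfl⟩ := exists_toLocalCohomology_eq a
  obtain ⟨l, hl, h0⟩ := h k e
  rw [← toLocalCohomology_restrict hl]
  exact (congrArg _ h0).trans (map_zero _)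

lemma extSupport_subset_support (I : Ideal R) (q : ℕ) (M : ModuleCat.{u} R) :
    extSupport I q M ⊆ Module.support R ((localCohomology I q).obj M) := by
  rintro p ⟨k, e, he⟩
  refine Module.mem_support_iff'.2 ⟨toLocalCohomology k e, fun s hs h0 => ?_⟩
  rw [← map_smul] at h0
  obtain ⟨l, hl, h⟩ := toLocalCohomology_eq_zero h0
  exact he s hs l hl ((restrict_smul hl s e).symm.trans h)

lemma support_powTorsion_subset_extSupport (I : Ideal R) (N : Type u) [AddCommGroup N]
    [Module R N] : Module.support R (powTorsion I N) ⊆ extSupport I 0 N := by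
  intro p hp
  obtain ⟨⟨x, k, hk⟩, hx⟩ := Module.mem_support_iff'.1 hp
  refine ⟨k, Ext.mk₀ (elemHom (N := ModuleCat.of R N) I x hk), fun s hs l h h0 => hx s hs ?_⟩
  rw [restrict_mk₀, ← Ext.mk₀_smul, Ext.mk₀_eq_zero_iff] at h0
  have h1 := congrArg (fun f => f.hom (Submodule.Quotient.mk 1)) h0
  refine Subtype.ext (Eq.trans ?_ h1)
  exact congrArg (s • ·) (elemHom_one (N := ModuleCat.of R N) I x hk).symm

lemma smul_eq_zero_of_mem_annihilator {X M : ModuleCat.{u} R} {i : ℕ} {r : R}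
    (hr : r ∈ Module.annihilator R M) (e : Ext X M i) : r • e = 0 := by
  have h : r • 𝟙 M = 0 := by
    ext x
    exact Module.mem_annihilator.1 hr x
  rw [Ext.smul_eq_comp_mk₀, h, Ext.mk₀_zero, Ext.comp_zero]

lemma support_localCohomology_subset_zeroLocus (I : Ideal R) (q : ℕ) (M : ModuleCat.{u} R) :
    Module.support R ((localCohomology I q).obj M) ⊆
      PrimeSpectrum.zeroLocus (I + Module.annihilator R M : Ideal R) := by
  intro p hp
  obtain ⟨a, ha⟩ := Module.mem_support_iff'.1 hp
  obtain ⟨k, e, rfl⟩ := exists_toLocalCohomology_eq a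
  have hmem : ∀ r : R, r • e = 0 → r ∈ p.asIdeal := fun r hr => by
    by_contra h
    exact ha r h (by rw [← map_smul, hr, map_zero])
  refine (sup_le ?_ fun r hr => hmem r (smul_eq_zero_of_mem_annihilator hr e) :
    I ⊔ Module.annihilator R M ≤ p.asIdeal)
  exact p.isPrime.le_of_pow_le (n := k) fun r hr => hmem r (smul_eq_zero_of_mem_pow hr e)

lemma subsingleton_localCohomology_of_cohomologicalDimension_lt {I : Ideal R}
    {M : ModuleCat.{u} R} {i : ℕ} (h : cohomologicalDimension I M < i) :
    Subsingleton ((localCohomology I i).obj M) := by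
  rw [← not_nontrivial_iff_subsingleton]
  exact fun hi => h.not_ge (le_sSup ⟨i, rfl, hi⟩)

end LocalCohomologyExt

open LocalCohomologyExt in
/-- if `dim (R/(I + Ann M)) = d`, `H^{d+t}_{I+J}(M) ≠ 0` and `cd(I,M) = t`,
then `dim Supp H^t_I(M) = d`. -/
theorem krullDim_support_top_localCohomology_eq
    (R : Type u) [CommRing R] [IsNoetherianRing R] (I : Ideal R) (M : ModuleCat.{u} R)
    (d t : ℕ) (hd : ringKrullDim (R ⧸ (I + Module.annihilator R M)) = (d : WithBot ℕ∞))
    (J : Ideal R) (hJ : Nontrivial ((localCohomology (I + J) (d + t)).obj M))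
    (hcd : cohomologicalDimension I M = (t : ℕ∞)) :
    Order.krullDim (Module.support R ((localCohomology I t).obj M)) = (d : WithBot ℕ∞) := by
  have hle (q : ℕ) : Order.krullDim (Module.support R ((localCohomology I q).obj M)) ≤ d := by
    rw [← hd, ringKrullDim_quotient]
    exact krullDim_mono_of_subset (support_localCohomology_subset_zeroLocus I q M)
  refine (hle t).antisymm (not_lt.1 fun hlt => ?_)
  have hdim (p q : ℕ) (hpq : p + q = d + t) : Order.krullDim (extSupport I q M) < p := by
    refine (krullDim_mono_of_subset (extSupport_subset_support I q M)).trans_lt ?_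
    rcases lt_trichotomy q t with hq | rfl | hq
    · exact (hle q).trans_lt (by exact_mod_cast (by omega : d < p))
    · rwa [show p = d by omega]
    · have := subsingleton_localCohomology_of_cohomologicalDimension_lt (I := I) (M := M)
        (i := q) (by rw [hcd]; exact_mod_cast hq)
      rw [Module.support_eq_empty, Order.krullDim_eq_bot]
      exact WithBot.bot_lt_coe _
  have hJ₀ : Vanishes J (d + t) (powTorsion I M) := vanishes_of_supportDim_lt J _ _
    ((krullDim_mono_of_subset (support_powTorsion_subset_extSupport I M)).trans_lt
      (hdim _ 0 rfl))
  exact not_nontrivial_iff_subsingleton.2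
    (vanishes_add I J _ M hJ₀ fun p q hpq => hdim p _ hpq).subsingleton_localCohomology hJ
end
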